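/- arXiv:1410.3997 — 2 statements merged into one kernel-verified Lean document; each statement's English description precedes it below -/
import Mathlib

section
/- Let f : A → A be an area preserving reversible homeomorphism of the closed annulus A. Then either f has no periodic point at all (there is no z ∈ A and integer k ≥ 1 with f^k(z) = z), or the set of interior symmetric periodic points of f (points z in the interior Å = {z : 1 < |z| < 2} with f^k(z) = z and f^ℓ(z) = I(z) for some integers k, ℓ ≥ 1) is infinite. -/
open MeasureTheory Set

noncomputable section

/-- The reflection `I(x,y) = (-x,y)` on the plane. -/
def refl2 : ℝ × ℝ → ℝ × ℝ := fun p => (-p.1, p.2)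

/-- The Euclidean norm `|z| = √(x² + y²)` on `ℝ²`. -/
def enorm2 (p : ℝ × ℝ) : ℝ := Real.sqrt (p.1 ^ 2 + p.2 ^ 2)

/-- The closed annulus `A = {z : 1 ≤ |z| ≤ 2}`. -/
def annulus : Set (ℝ × ℝ) := {p | 1 ≤ enorm2 p ∧ enorm2 p ≤ 2}

/-- The open annulus `Å = {z : 1 < |z| < 2}`, the interior of `A`. -/
def annulusInt : Set (ℝ × ℝ) := {p | 1 < enorm2 p ∧ enorm2 p < 2}

lemma enorm2_refl2 (p : ℝ × ℝ) : enorm2 (refl2 p) = enorm2 p := by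
  simp [enorm2, refl2, neg_sq]

lemma refl2_mem_annulus {p : ℝ × ℝ} (h : p ∈ annulus) : refl2 p ∈ annulus := by
  simpa [annulus, enorm2_refl2] using h

/-- The restriction `I_A` of the reflection to the closed annulus. -/
def IA : annulus → annulus := fun z => ⟨refl2 z, refl2_mem_annulus z.2⟩

/-!
Let `F` be the square of a lift of `f` to the strip `ℝ × [1, 2]`. It is reversible with respect to
`(x, y) ↦ (-x, y)`, commutes with the translation `T : (x, y) ↦ (x + 1, y)` and preserves the lower
boundary line. If `F ^ n` maps a point of the axis `x = 0` to the line `x = k` with `k` an integer,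
then `T⁻ᵏ Fⁿ` maps it to the axis, so that by reversibility the square of this map fixes it, and the
point projects to a symmetric periodic point of `f`. Suppose that there are only finitely many such
points on the axis. A periodic point of `f` gives some `G = T⁻ᵖ F ^ q` with a fixed point.

Every integer between two values of `x` on the arc `G ^ n (axis)` is attained on this arc, whose
width is therefore bounded independently of `n`; as `G` has a fixed point, so is the displacement
of `G ^ n`. Hence the recurrence of `f`, given by the invariant measure, lifts to the strip: all
powers of `G` are nonwandering.

On the other hand, replacing `G` by a power, the points of the axis that return to the axis are
fixed. Climbing from the boundary line, where `G` is monotone, and crossing these finitely many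
fixed points one after the other, one finds a power `K` of `G` for which every other point of the
axis stays forever on one side of it. If such a point moves to the right, a small box `C` to its
right has all its images `K ^ m C` on the right of the axis, while `K⁻¹ C` is on the left. Hence
`C` never meets its forward images, a contradiction.
-/

open Filter Topology Function

/-! ### Semiconjugacies between an element of a group and its inverse -/

section Group

variable {M : Type*} [Group M]

lemma semiconjBy_sq_inv_of_semiconjBy_mul_inv {σ a φ : M} (hσ : σ * σ = 1)
    (ha : SemiconjBy σ a a⁻¹) (hφ : SemiconjBy σ φ (a * φ⁻¹)) :
    SemiconjBy σ (φ ^ 2) (φ ^ 2)⁻¹ := by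
  have htwice : φ = a⁻¹ * (a * φ⁻¹)⁻¹ := by
    simpa [hσ] using ((ha.mul_right hφ.inv_right).mul_left hφ).eq
  have hinv : a * φ⁻¹ * a = φ⁻¹ := by
    nth_rewrite 2 [htwice]
    group
  convert hφ.pow_right 2 using 1
  rw [sq, sq, ← mul_assoc, hinv, mul_inv_rev]

lemma commute_sq_of_semiconjBy_zpow {φ τ : M} (hτ : Injective fun n : ℤ ↦ τ ^ n) {e e' : ℤ}
    (h : SemiconjBy φ τ (τ ^ e)) (h' : SemiconjBy φ⁻¹ τ (τ ^ e')) : Commute (φ ^ 2) τ := by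
  have hunit : e * e' = 1 := hτ <| by
    have := ((h.zpow_right e').mul_left h').eq
    rw [mul_inv_cancel, one_mul, mul_one] at this
    simpa [zpow_mul] using this.symm
  have hsq : e * e = 1 := by
    rcases Int.mul_eq_one_iff_eq_one_or_neg_one.1 hunit with ⟨rfl, -⟩ | ⟨rfl, -⟩ <;> rfl
  have := (h.zpow_right e).mul_left h
  rwa [← zpow_mul, hsq, zpow_one, ← sq] at this

end Group

/-! ### Sign changes and powers of homeomorphisms -/

section Topology

variable {X : Type*} [TopologicalSpace X]

lemma pos_of_isPreconnected_of_ne_zero {s : Set X} (hs : IsPreconnected s) {φ : X → ℝ}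
    (hφ : Continuous φ) (h0 : ∀ u ∈ s, φ u ≠ 0) {u v : X} (hu : u ∈ s) (hv : v ∈ s)
    (hpos : 0 < φ u) : 0 < φ v := by
  by_contra! h
  obtain ⟨w, hw, hw0⟩ := hs.intermediate_value hv hu hφ.continuousOn ⟨h, hpos.le⟩
  exact h0 w hw hw0

lemma locallyConnectedSpace_of_orderTopology {Y : Type*} [ConditionallyCompleteLinearOrder Y]
    [TopologicalSpace Y] [OrderTopology Y] [DenselyOrdered Y] : LocallyConnectedSpace Y := by
  refine locallyConnectedSpace_iff_connected_subsets.2 fun y U hU ↦ ?_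
  obtain ⟨a, b, -, hab, hsub⟩ := exists_Icc_mem_subset_of_mem_nhds hU
  exact ⟨Icc a b, hab, isPreconnected_Icc, hsub⟩

lemma homeomorph_coe_pow (f : X ≃ₜ X) (n : ℕ) : ⇑(f ^ n) = f^[n] :=
  hom_coe_pow _ rfl (fun _ _ ↦ rfl) _ _

lemma homeomorph_pow_apply_of_fixed {f : X ≃ₜ X} {x : X} (h : f x = x) (n : ℕ) :
    (f ^ n) x = x := by
  rw [homeomorph_coe_pow]
  exact IsFixedPt.iterate h n

lemma homeomorph_inv_apply_of_fixed {f : X ≃ₜ X} {x : X} (h : f x = x) : f⁻¹ x = x :=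
  f.symm_apply_eq.2 h.symm

/-- Every nonempty open set meets one of its forward images: Birkhoff's nonwandering property. -/
def Nonwandering (G : X ≃ₜ X) : Prop :=
  ∀ C : Set X, IsOpen C → C.Nonempty → ∃ n, 1 ≤ n ∧ ∃ w ∈ C, (G ^ n) w ∈ C

lemma Nonwandering.inv {G : X ≃ₜ X} (hG : Nonwandering G) :
    Nonwandering G⁻¹ := by
  intro C hC hne
  obtain ⟨n, hn, w, hw, hw'⟩ := hG C hC hne
  refine ⟨n, hn, _, hw', ?_⟩
  rwa [inv_pow, Homeomorph.inv_apply, Homeomorph.symm_apply_apply]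

end Topology

/-- The strip `ℝ × Y` over a space `Y` of heights. Over `Y = [1, 2]` it is the universal cover of
the annulus. -/
abbrev Strip (Y : Type*) := ℝ × Y

namespace Strip

/-! ### Reversible homeomorphisms of a strip -/

variable {Y : Type*}

/-- The point at height `y` of the symmetry axis `x = 0` of the strip. -/
def axis (y : Y) : Strip Y := (0, y)

lemma axis_fst (y : Y) : (axis y).1 = 0 := rfl

lemma axis_snd_of_fst_eq_zero {u : Strip Y} (h : u.1 = 0) : axis u.2 = u := by
  simp [axis, ← h]

variable [TopologicalSpace Y]

/-- The reflection of the strip in the axis `x = 0`. -/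
def mirror : Strip Y ≃ₜ Strip Y := (Homeomorph.neg ℝ).prodCongr (Homeomorph.refl Y)

lemma mirror_apply (u : Strip Y) : mirror u = (-u.1, u.2) := rfl

lemma mirror_mul_mirror : (mirror * mirror : Strip Y ≃ₜ Strip Y) = 1 := by
  ext u <;> simp [mirror_apply]

lemma mirror_mirror (u : Strip Y) : mirror (mirror u) = u := by simp [mirror_apply]

lemma continuous_axis : Continuous (axis : Y → Strip Y) := Continuous.prodMk_right 0

lemma mirror_axis (y : Y) : mirror (axis y) = axis y := by simp [mirror_apply, axis]

lemma continuous_pow_axis_fst (G : Strip Y ≃ₜ Strip Y) (n : ℕ) :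
    Continuous fun y ↦ ((G ^ n) (axis y)).1 :=
  continuous_fst.comp ((G ^ n).continuous.comp continuous_axis)

/-- A homeomorphism of the strip is reversible if the reflection conjugates it to its inverse. -/
def Reversible (G : Strip Y ≃ₜ Strip Y) : Prop := SemiconjBy mirror G G⁻¹

namespace Reversible

variable {G : Strip Y ≃ₜ Strip Y}

lemma pow (hG : Reversible G) (n : ℕ) : Reversible (G ^ n) := by
  simpa only [Reversible, inv_pow] using hG.pow_right n

lemma inv (hG : Reversible G) : Reversible G⁻¹ := SemiconjBy.inv_right hG

lemma inv_axis (hG : Reversible G) (y : Y) : G⁻¹ (axis y) = mirror (G (axis y)) := by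
  have h := DFunLike.congr_fun hG.eq (axis y)
  rwa [Homeomorph.mul_apply, Homeomorph.mul_apply, mirror_axis, eq_comm] at h

lemma inv_axis_fst (hG : Reversible G) (y : Y) : (G⁻¹ (axis y)).1 = -(G (axis y)).1 := by
  rw [hG.inv_axis, mirror_apply]

lemma inv_pow_axis_fst (hG : Reversible G) (n : ℕ) (y : Y) :
    ((G⁻¹ ^ n) (axis y)).1 = -((G ^ n) (axis y)).1 := by
  rw [inv_pow, (hG.pow n).inv_axis_fst]

lemma fst_eq_neg_of_apply_mem_axis (hG : Reversible G) {u : Strip Y} (h : (G u).1 = 0) :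
    u.1 = -(G (axis (G u).2)).1 := by
  rw [← hG.inv_axis_fst, axis_snd_of_fst_eq_zero h, Homeomorph.inv_apply, G.symm_apply_apply]

lemma mul_self_apply_axis (hG : Reversible G) {y : Y} (h : (G (axis y)).1 = 0) :
    (G * G) (axis y) = axis y := by
  have h' : G⁻¹ (axis y) = G (axis y) := by
    rw [hG.inv_axis, mirror_apply, h, neg_zero, ← h]
  rw [Homeomorph.mul_apply, ← h', Homeomorph.inv_apply, G.apply_symm_apply]

end Reversible

/-! ### Returns to the axis -/

/-- The heights of the points of the axis some iterate of which lies on the axis. -/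
def axisReturns (G : Strip Y ≃ₜ Strip Y) : Set Y := {y | ∃ n, 1 ≤ n ∧ ((G ^ n) (axis y)).1 = 0}

/-- All iterates of the point of the axis at height `y` lie on the right of the axis. -/
def RightMoving (G : Strip Y ≃ₜ Strip Y) (y : Y) : Prop := ∀ n, 1 ≤ n → 0 < ((G ^ n) (axis y)).1

/-- The iterates under `G`, or those under `G⁻¹`, of the point of the axis at height `y` all lie on
the right of the axis. If `G` is reversible, the latter means that the iterates under `G` lie on
the left. -/
def OneSided (G : Strip Y ≃ₜ Strip Y) (y : Y) : Prop := RightMoving G y ∨ RightMoving G⁻¹ y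

section Returns

variable {G : Strip Y ≃ₜ Strip Y} {y : Y}

lemma RightMoving.pow (h : RightMoving G y) {N : ℕ} (hN : 1 ≤ N) : RightMoving (G ^ N) y :=
  fun n hn ↦ pow_mul G N n ▸ h _ (Nat.mul_pos hN hn)

lemma OneSided.pow (h : OneSided G y) {N : ℕ} (hN : 1 ≤ N) : OneSided (G ^ N) y :=
  h.imp (·.pow hN) fun h ↦ inv_pow G N ▸ h.pow hN

lemma OneSided.inv (h : OneSided G y) : OneSided G⁻¹ y := by
  rw [OneSided, inv_inv]
  exact h.symm

namespace Reversible

lemma rightMoving_inv_iff (hG : Reversible G) :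
    RightMoving G⁻¹ y ↔ ∀ n, 1 ≤ n → ((G ^ n) (axis y)).1 < 0 := by
  simp only [RightMoving, hG.inv_pow_axis_fst, Left.neg_pos_iff]

lemma axisReturns_inv (hG : Reversible G) : axisReturns G⁻¹ = axisReturns G := by
  simp only [axisReturns, hG.inv_pow_axis_fst, neg_eq_zero]

lemma exists_pow_apply_axis (hG : Reversible G) (hy : y ∈ axisReturns G) :
    ∃ n, 1 ≤ n ∧ (G ^ n) (axis y) = axis y := by
  obtain ⟨n, hn, h⟩ := hy
  exact ⟨n + n, by omega, pow_add G n n ▸ (hG.pow n).mul_self_apply_axis h⟩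

lemma axisReturns_pow (hG : Reversible G) {N : ℕ} (hN : 1 ≤ N) :
    axisReturns (G ^ N) = axisReturns G := by
  apply Subset.antisymm
  · rintro y ⟨n, hn, h⟩
    exact ⟨N * n, Nat.mul_pos hN hn, by rwa [pow_mul]⟩
  · intro y hy
    obtain ⟨n, hn, h⟩ := hG.exists_pow_apply_axis hy
    refine ⟨n, hn, ?_⟩
    rw [← pow_mul, mul_comm, pow_mul, homeomorph_pow_apply_of_fixed h, axis]

lemma exists_common_period (hG : Reversible G) (hfin : (axisReturns G).Finite) :
    ∃ N, 1 ≤ N ∧ ∀ y ∈ axisReturns G, (G ^ N) (axis y) = axis y := by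
  choose! ν hν hνfix using fun y (hy : y ∈ axisReturns G) ↦ hG.exists_pow_apply_axis hy
  refine ⟨∏ y ∈ hfin.toFinset, ν y,
    Finset.one_le_prod' fun y hy ↦ hν y (hfin.mem_toFinset.1 hy), fun y hy ↦ ?_⟩
  obtain ⟨c, hc⟩ := Finset.dvd_prod_of_mem ν (hfin.mem_toFinset.2 hy)
  rw [hc, pow_mul]
  exact homeomorph_pow_apply_of_fixed (hνfix y hy) c

end Reversible

end Returns

/-! ### Dynamics near a fixed point of the axis -/

lemma axis_mem_closure_Ioo_prod {η : ℝ} (hη : 0 < η) {V : Set Y} {y : Y} (hy : y ∈ V) :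
    axis y ∈ closure (Ioo 0 η ×ˢ V) := by
  rw [closure_prod_eq, closure_Ioo hη.ne]
  exact ⟨left_mem_Icc.2 hη.le, subset_closure hy⟩

lemma exists_Ioo_prod_subset_of_mem_nhds_axis [LocallyConnectedSpace Y] {y : Y}
    {s : Set (Strip Y)} (hs : s ∈ 𝓝 (axis y)) :
    ∃ η : ℝ, 0 < η ∧ ∃ V : Set Y, IsOpen V ∧ IsPreconnected V ∧ y ∈ V ∧ Ioo (-η) η ×ˢ V ⊆ s := by
  obtain ⟨U, hU, W, hW, hUW⟩ := mem_nhds_prod_iff.1 hs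
  obtain ⟨η, hη, hηU⟩ := (nhds_basis_Ioo_pos (0 : ℝ)).mem_iff.1 hU
  obtain ⟨V, hVW, hVo, hyV, hVc⟩ :=
    locallyConnectedSpace_iff_subsets_isOpen_isConnected.1 ‹_› y W hW
  rw [zero_sub, zero_add] at hηU
  exact ⟨η, hη, V, hVo, hVc.isPreconnected, hyV, (prod_mono hηU hVW).trans hUW⟩

namespace Reversible

variable {K : Strip Y ≃ₜ Strip Y} {t : Y}

lemma eventually_apply_fst_ne_zero (hK : Reversible K) (hfix : K (axis t) = axis t)
    (h : ∀ᶠ y in 𝓝[≠] t, 0 < (K (axis y)).1) :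
    ∀ᶠ u in 𝓝 (axis t), 0 < u.1 → (K u).1 ≠ 0 := by
  have hheight : Tendsto (fun u ↦ (K u).2) (𝓝 (axis t)) (𝓝 t) := by
    have := (continuous_snd.comp K.continuous).tendsto (axis t)
    rwa [comp_apply, hfix] at this
  filter_upwards [hheight.eventually (eventually_nhdsWithin_iff.1 h)] with u hu hpos h0
  rw [hK.fst_eq_neg_of_apply_mem_axis h0] at hpos
  by_cases ht : (K u).2 = t
  · simp [ht, hfix, axis_fst] at hpos
  · linarith [hu ht]

variable [LocallyConnectedSpace Y] [(𝓝[≠] t).NeBot]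

lemma eventually_apply_fst_pos (hK : Reversible K) (hfix : K (axis t) = axis t)
    (h : ∀ᶠ y in 𝓝[≠] t, 0 < (K (axis y)).1) :
    ∀ᶠ u in 𝓝 (axis t), 0 < u.1 → 0 < (K u).1 := by
  obtain ⟨η, hη, V, hVo, hVc, htV, hsub⟩ :=
    exists_Ioo_prod_subset_of_mem_nhds_axis (hK.eventually_apply_fst_ne_zero hfix h)
  have hne : ∀ u ∈ Ioo 0 η ×ˢ V, (K u).1 ≠ 0 :=
    fun u hu ↦ hsub ⟨⟨by linarith [hu.1.1], hu.1.2⟩, hu.2⟩ hu.1.1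
  obtain ⟨v, hvpos, hv⟩ : ∃ v, 0 < (K v).1 ∧ v ∈ Ioo 0 η ×ˢ V := by
    obtain ⟨y, hy, hyV⟩ :=
      (h.and (eventually_nhdsWithin_of_eventually_nhds (hVo.mem_nhds htV))).exists
    exact mem_closure_iff_nhds.1 (axis_mem_closure_Ioo_prod hη hyV) {v | 0 < (K v).1}
      ((isOpen_lt continuous_const (continuous_fst.comp K.continuous)).mem_nhds hy)
  filter_upwards [prod_mem_nhds (Ioo_mem_nhds (neg_lt_zero.2 hη) hη) (hVo.mem_nhds htV)]
    with u hu hpos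
  exact pos_of_isPreconnected_of_ne_zero (isPreconnected_Ioo.prod hVc)
    (continuous_fst.comp K.continuous) hne hv ⟨⟨hpos, hu.1.2⟩, hu.2⟩ hvpos

lemma eventually_pow_axis_fst_pos (hK : Reversible K) (hfix : K (axis t) = axis t)
    (h : ∀ᶠ y in 𝓝[≠] t, 0 < (K (axis y)).1) {n : ℕ} (hn : 1 ≤ n) :
    ∀ᶠ y in 𝓝[≠] t, 0 < ((K ^ n) (axis y)).1 := by
  induction n, hn using Nat.le_induction with
  | base => simpa using h
  | succ n _ ih =>
    have hlim : Tendsto (fun y ↦ (K ^ n) (axis y)) (𝓝[≠] t) (𝓝 (axis t)) := by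
      have := ((K ^ n).continuous.comp continuous_axis).tendsto t
      rw [comp_apply, homeomorph_pow_apply_of_fixed hfix] at this
      exact this.mono_left nhdsWithin_le_nhds
    filter_upwards [ih, hlim.eventually (hK.eventually_apply_fst_pos hfix h)] with y hy hstep
    rw [pow_succ', Homeomorph.mul_apply]
    exact hstep hy

end Reversible

/-! ### One-sided maps are not nonwandering -/

lemma RightMoving.pow_apply_fst_pos {K : Strip Y ≃ₜ Strip Y} {y : Y} (hy : RightMoving K y)
    {C : Set (Strip Y)} (hC : IsPreconnected C) (hcl : axis y ∈ closure C)
    (hright : ∀ u ∈ C, 0 < u.1) (hne : ∀ m, ∀ u ∈ C, ((K ^ m) u).1 ≠ 0) (m : ℕ)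
    {u : Strip Y} (hu : u ∈ C) : 0 < ((K ^ m) u).1 := by
  rcases m.eq_zero_or_pos with rfl | hm
  · exact hright u hu
  · have hcont : Continuous fun v ↦ ((K ^ m) v).1 := continuous_fst.comp (K ^ m).continuous
    obtain ⟨v, hvpos, hv⟩ := mem_closure_iff_nhds.1 hcl {v | 0 < ((K ^ m) v).1}
      ((isOpen_lt continuous_const hcont).mem_nhds (hy m hm))
    exact pos_of_isPreconnected_of_ne_zero hC hcont (hne m) hv hu hvpos

namespace Reversible

variable {K : Strip Y ≃ₜ Strip Y}

lemma inv_apply_fst_nonneg_of_pow_apply_mem_axis (hK : Reversible K)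
    (hfix : ∀ y ∈ axisReturns K, K (axis y) = axis y)
    (hside : ∀ y ∉ axisReturns K, OneSided K y) {u : Strip Y} (hu : 0 < u.1) {m : ℕ}
    (hm : ((K ^ m) u).1 = 0) : 0 ≤ (K⁻¹ u).1 := by
  set r := ((K ^ m) u).2 with hr
  have hu' : u.1 = -((K ^ m) (axis r)).1 := (hK.pow m).fst_eq_neg_of_apply_mem_axis hm
  have hsucc : (K ^ (m + 1)) (K⁻¹ u) = (K ^ m) u := by
    rw [pow_succ, Homeomorph.mul_apply, Homeomorph.inv_apply, K.apply_symm_apply]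
  have hinv : (K⁻¹ u).1 = -((K ^ (m + 1)) (axis r)).1 := by
    rw [hr, ← hsucc]
    exact (hK.pow (m + 1)).fst_eq_neg_of_apply_mem_axis (by rw [hsucc, hm])
  have hneg : ((K ^ m) (axis r)).1 < 0 := by linarith
  have hr_not : r ∉ axisReturns K := fun h ↦ by
    simp [homeomorph_pow_apply_of_fixed (hfix r h), axis_fst] at hneg
  rcases hside r hr_not with h | h
  · rcases m.eq_zero_or_pos with rfl | hm
    · simp [axis_fst] at hneg
    · exact absurd (h m hm) hneg.not_gt
  · linarith [hK.rightMoving_inv_iff.1 h (m + 1) m.succ_pos]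

variable [LocallyConnectedSpace Y]

lemma not_nonwandering_of_rightMoving (hK : Reversible K)
    (hfix : ∀ y ∈ axisReturns K, K (axis y) = axis y)
    (hside : ∀ y ∉ axisReturns K, OneSided K y) {y : Y} (hy : RightMoving K y) :
    ¬ Nonwandering K := by
  intro hK'
  have hy_left : (K⁻¹ (axis y)).1 < 0 := by
    rw [hK.inv_axis_fst, neg_lt_zero]
    simpa using hy 1 le_rfl
  have hleft : {u : Strip Y | (K⁻¹ u).1 < 0} ∈ 𝓝 (axis y) :=
    (isOpen_lt (continuous_fst.comp (K⁻¹).continuous) continuous_const).mem_nhds hy_left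
  obtain ⟨η, hη, V, hVo, hVc, hyV, hsub⟩ := exists_Ioo_prod_subset_of_mem_nhds_axis hleft
  have hinv : ∀ u ∈ Ioo 0 η ×ˢ V, (K⁻¹ u).1 < 0 :=
    fun u hu ↦ hsub ⟨⟨by linarith [hu.1.1], hu.1.2⟩, hu.2⟩
  have hne : ∀ m, ∀ u ∈ Ioo 0 η ×ˢ V, ((K ^ m) u).1 ≠ 0 := fun m u hu hm ↦
    (hinv u hu).not_ge (hK.inv_apply_fst_nonneg_of_pow_apply_mem_axis hfix hside hu.1.1 hm)
  obtain ⟨n, hn, w, hw, hw'⟩ :=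
    hK' _ (isOpen_Ioo.prod hVo) ((nonempty_Ioo.2 hη).prod ⟨y, hyV⟩)
  obtain ⟨m, rfl⟩ := Nat.exists_eq_succ_of_ne_zero (Nat.one_le_iff_ne_zero.1 hn)
  have hpos := hy.pow_apply_fst_pos (isPreconnected_Ioo.prod hVc)
    (axis_mem_closure_Ioo_prod hη hyV) (fun u hu ↦ hu.1.1) hne m hw
  have hneg := hinv _ hw'
  rw [pow_succ', Homeomorph.mul_apply, Homeomorph.inv_apply, K.symm_apply_apply] at hneg
  exact hneg.not_gt hpos

lemma not_nonwandering_of_oneSided (hK : Reversible K)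
    (hfix : ∀ y ∈ axisReturns K, K (axis y) = axis y)
    (hside : ∀ y ∉ axisReturns K, OneSided K y) {y : Y} (hy : y ∉ axisReturns K) :
    ¬ Nonwandering K := by
  rcases hside y hy with h | h
  · exact hK.not_nonwandering_of_rightMoving hfix hside h
  · refine fun hK' ↦ hK.inv.not_nonwandering_of_rightMoving ?_ ?_ h hK'.inv
    · exact fun y hy ↦ homeomorph_inv_apply_of_fixed (hfix y (hK.axisReturns_inv ▸ hy))
    · exact fun y hy ↦ (hside y (hK.axisReturns_inv ▸ hy)).inv

end Reversible

/-! ### One-sidedness of a common iterate -/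

section Order

variable [ConditionallyCompleteLinearOrder Y] [OrderTopology Y] [DenselyOrdered Y]
  {G K : Strip Y ≃ₜ Strip Y} {t y y' : Y}

lemma pow_axis_fst_pos_of_disjoint_uIcc (hd : Disjoint (uIcc y y') (axisReturns G)) {n : ℕ}
    (hn : 1 ≤ n) (h : 0 < ((G ^ n) (axis y)).1) : 0 < ((G ^ n) (axis y')).1 :=
  pos_of_isPreconnected_of_ne_zero isPreconnected_uIcc (continuous_pow_axis_fst G n)
    (fun _ hu h0 ↦ hd.notMem_of_mem_left hu ⟨n, hn, h0⟩) left_mem_uIcc right_mem_uIcc h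

lemma RightMoving.of_disjoint_uIcc (h : RightMoving G y)
    (hd : Disjoint (uIcc y y') (axisReturns G)) : RightMoving G y' :=
  fun n hn ↦ pow_axis_fst_pos_of_disjoint_uIcc hd hn (h n hn)

namespace Reversible

lemma oneSided_of_disjoint_uIcc (hG : Reversible G) (h : OneSided G y)
    (hd : Disjoint (uIcc y y') (axisReturns G)) : OneSided G y' :=
  h.imp (·.of_disjoint_uIcc hd) (·.of_disjoint_uIcc (by rwa [hG.axisReturns_inv]))

lemma eventually_rightMoving_nhdsLT (hK : Reversible K) (hfin : (axisReturns K).Finite)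
    (hside : ∀ y < t, y ∉ axisReturns K → OneSided K y) :
    (∀ᶠ z in 𝓝[<] t, RightMoving K z) ∨ ∀ᶠ z in 𝓝[<] t, RightMoving K⁻¹ z := by
  by_cases hex : ∃ b, b < t
  · have hnot : ∀ᶠ z in 𝓝[<] t, z ∉ axisReturns K := by
      filter_upwards [nhdsWithin_le_nhds
        ((hfin.subset sdiff_subset).isClosed.isOpen_compl.mem_nhds
          (by simp : t ∈ (axisReturns K \ {t})ᶜ)), self_mem_nhdsWithin] with z hz hzt hzR
      exact hz ⟨hzR, (mem_Iio.1 hzt).ne⟩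
    obtain ⟨l', hl', hsub'⟩ := (mem_nhdsLT_iff_exists_Ioo_subset' hex.choose_spec).1 hnot
    obtain ⟨l, hll', hl⟩ := exists_between (mem_Iio.1 hl')
    have hsub : Ico l t ⊆ (axisReturns K)ᶜ := (Ico_subset_Ioo_left hll').trans hsub'
    have hd : ∀ z ∈ Ico l t, Disjoint (uIcc l z) (axisReturns K) := fun z hz ↦
      disjoint_left.2 fun w hw ↦ by
        rw [uIcc_of_le hz.1] at hw
        exact hsub ⟨hw.1, hw.2.trans_lt hz.2⟩
    refine (hside l hl (hsub (left_mem_Ico.2 hl))).imp (fun h ↦ ?_) fun h ↦ ?_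
    · filter_upwards [Ico_mem_nhdsLT hl] with z hz using h.of_disjoint_uIcc (hd z hz)
    · filter_upwards [Ico_mem_nhdsLT hl] with z hz
      exact h.of_disjoint_uIcc (hK.axisReturns_inv ▸ hd z hz)
  · refine .inl ?_
    filter_upwards [self_mem_nhdsWithin] with z hz using (hex ⟨z, hz⟩).elim

lemma exists_pow_oneSided_of_rightMoving_nhdsLT (hK : Reversible K) (hfix : K (axis t) = axis t)
    (hty : t < y) (hd : Disjoint (Ioc t y) (axisReturns K))
    (hleft : ∀ᶠ z in 𝓝[<] t, RightMoving K z) : ∃ j, 1 ≤ j ∧ OneSided (K ^ j) y := by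
  have hdz : ∀ z ∈ Ioc t y, Disjoint (uIcc z y) (axisReturns K) := fun z hz ↦
    hd.mono_left (by rw [uIcc_of_le hz.2]; exact Icc_subset_Ioc hz.1 le_rfl)
  by_cases hex : ∃ j, 1 ≤ j ∧ 0 < ((K ^ j) (axis y)).1
  · obtain ⟨j, hj, hpos⟩ := hex
    have := locallyConnectedSpace_of_orderTopology (Y := Y)
    have := nhdsGT_neBot_of_exists_gt ⟨y, hty⟩
    have : (𝓝[≠] t).NeBot := NeBot.mono this (nhdsGT_le_nhdsNE t)
    have hnear : ∀ᶠ z in 𝓝[≠] t, 0 < ((K ^ j) (axis z)).1 := by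
      rw [← nhdsLT_sup_nhdsGT, eventually_sup]
      refine ⟨hleft.mono fun z hz ↦ hz j hj, ?_⟩
      filter_upwards [Ioc_mem_nhdsGT hty] with z hz
      exact pow_axis_fst_pos_of_disjoint_uIcc (uIcc_comm z y ▸ hdz z hz) hj hpos
    refine ⟨j, hj, .inl fun n hn ↦ ?_⟩
    obtain ⟨z, hzpos, hz⟩ := (((hK.pow j).eventually_pow_axis_fst_pos
      (homeomorph_pow_apply_of_fixed hfix j) hnear hn).filter_mono (nhdsGT_le_nhdsNE t)
      |>.and (Ioc_mem_nhdsGT hty)).exists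
    exact pow_axis_fst_pos_of_disjoint_uIcc (by rw [hK.axisReturns_pow hj]; exact hdz z hz) hn hzpos
  · push Not at hex
    refine ⟨1, le_rfl, ?_⟩
    rw [pow_one]
    exact .inr (hK.rightMoving_inv_iff.2 fun n hn ↦ (hex n hn).lt_of_ne
      fun h ↦ hd.notMem_of_mem_left (right_mem_Ioc.2 hty) ⟨n, hn, h⟩)

lemma exists_pow_oneSided_of_lt (hK : Reversible K) (hfin : (axisReturns K).Finite)
    (hfix : K (axis t) = axis t) (hside : ∀ y < t, y ∉ axisReturns K → OneSided K y)
    (hty : t < y) (hd : Disjoint (Ioc t y) (axisReturns K)) : ∃ j, 1 ≤ j ∧ OneSided (K ^ j) y := by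
  rcases hK.eventually_rightMoving_nhdsLT hfin hside with h | h
  · exact hK.exists_pow_oneSided_of_rightMoving_nhdsLT hfix hty hd h
  · obtain ⟨j, hj, hy⟩ := hK.inv.exists_pow_oneSided_of_rightMoving_nhdsLT
      (homeomorph_inv_apply_of_fixed hfix) hty (hK.axisReturns_inv ▸ hd) h
    refine ⟨j, hj, ?_⟩
    simpa only [inv_pow, inv_inv] using hy.inv

lemma exists_pow_oneSided_insert (hK : Reversible K) (hfin : (axisReturns K).Finite)
    (hfix : ∀ y ∈ axisReturns K, K (axis y) = axis y) {s : Set Y} {a : Y} (ha : ∀ b ∈ s, b < a)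
    (hside : ∀ y ∉ axisReturns K, axisReturns K ∩ Iic y ⊆ s → OneSided K y) :
    ∃ j, 1 ≤ j ∧ ∀ y ∉ axisReturns K, axisReturns K ∩ Iic y ⊆ insert a s →
      OneSided (K ^ j) y := by
  have hbelow : ∀ w ∈ insert a s, w ≤ a := forall_mem_insert.2 ⟨le_rfl, fun b hb ↦ (ha b hb).le⟩
  by_cases hex : ∃ y, a < y ∧ axisReturns K ∩ Iic y ⊆ insert a s ∧ a ∈ axisReturns K
  · obtain ⟨y₁, hay₁, hy₁, haR⟩ := hex
    have hside' : ∀ y < a, axisReturns K ∩ Iic y ⊆ insert a s → y ∉ axisReturns K → OneSided K y :=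
      fun y hya hys hyR ↦ hside y hyR fun w hw ↦
        (hys hw).resolve_left ((mem_Iic.1 hw.2).trans_lt hya).ne
    obtain ⟨j, hj, hy₁j⟩ := hK.exists_pow_oneSided_of_lt hfin (hfix a haR)
      (fun y hya ↦ hside' y hya fun w hw ↦ hy₁ ⟨hw.1, (mem_Iic.1 hw.2).trans (hya.trans hay₁).le⟩)
      hay₁ (disjoint_left.2 fun w hw hwR ↦ (hbelow w (hy₁ ⟨hwR, hw.2⟩)).not_gt hw.1)
    refine ⟨j, hj, fun y hyR hy ↦ ?_⟩
    rcases lt_trichotomy y a with hya | rfl | hya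
    · exact (hside' y hya hy hyR).pow hj
    · exact absurd haR hyR
    · refine (hK.pow j).oneSided_of_disjoint_uIcc hy₁j ?_
      rw [hK.axisReturns_pow hj, disjoint_left]
      rintro w ⟨hw, hw'⟩ hwR
      refine (hbelow w ?_).not_gt ((lt_inf_iff.2 ⟨hay₁, hya⟩).trans_le hw)
      exact (le_sup_iff.1 hw').elim (fun h ↦ hy₁ ⟨hwR, h⟩) fun h ↦ hy ⟨hwR, h⟩
  · refine ⟨1, le_rfl, fun y hyR hy ↦ ?_⟩
    rw [pow_one]
    refine hside y hyR fun w hw ↦ (hy hw).resolve_left ?_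
    rintro rfl
    exact hex ⟨y, (mem_Iic.1 hw.2).lt_of_ne (fun h ↦ hyR (h ▸ hw.1)), hy, hw.1⟩

variable [OrderBot Y]

lemma exists_pow_oneSided (hK : Reversible K) (hfin : (axisReturns K).Finite)
    (hfix : ∀ y ∈ axisReturns K, K (axis y) = axis y)
    (hbot : ⊥ ∉ axisReturns K → OneSided K ⊥) :
    ∃ M, 1 ≤ M ∧ ∀ y ∉ axisReturns K, OneSided (K ^ M) y := by
  suffices h : ∀ s : Finset Y, ∃ M, 1 ≤ M ∧ ∀ y ∉ axisReturns K, axisReturns K ∩ Iic y ⊆ s →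
      OneSided (K ^ M) y by
    obtain ⟨M, hM, hside⟩ := h hfin.toFinset
    exact ⟨M, hM, fun y hy ↦ hside y hy fun w hw ↦ hfin.mem_toFinset.2 hw.1⟩
  intro s
  induction s using Finset.induction_on_max with
  | empty =>
    refine ⟨1, le_rfl, fun y _ hy ↦ ?_⟩
    have hd : Disjoint (Icc ⊥ y) (axisReturns K) :=
      disjoint_left.2 fun w hw hwR ↦ by simpa using hy ⟨hwR, hw.2⟩
    rw [pow_one]
    exact hK.oneSided_of_disjoint_uIcc (hbot (hd.notMem_of_mem_left (left_mem_Icc.2 bot_le)))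
      (uIcc_of_le (bot_le (a := y)) ▸ hd)
  | insert a s ha ih =>
    obtain ⟨M, hM, hside⟩ := ih
    simp only [← hK.axisReturns_pow hM] at hside hfin hfix
    obtain ⟨j, hj, h⟩ := (hK.pow M).exists_pow_oneSided_insert hfin
      (fun y hy ↦ homeomorph_pow_apply_of_fixed (hfix y hy) M) ha hside
    refine ⟨M * j, Nat.mul_pos hM hj, ?_⟩
    simpa only [hK.axisReturns_pow hM, pow_mul, Finset.coe_insert] using h

theorem infinite_axisReturns [Infinite Y] (hG : Reversible G)
    (hbot : ⊥ ∉ axisReturns G → OneSided G ⊥) (hwander : ∀ N, 1 ≤ N → Nonwandering (G ^ N)) :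
    (axisReturns G).Infinite := by
  intro hfin
  have := locallyConnectedSpace_of_orderTopology (Y := Y)
  obtain ⟨N, hN, hfix⟩ := hG.exists_common_period hfin
  obtain ⟨M, hM, hside⟩ := (hG.pow N).exists_pow_oneSided (hG.axisReturns_pow hN ▸ hfin)
    (hG.axisReturns_pow hN ▸ hfix) fun h ↦ (hbot (hG.axisReturns_pow hN ▸ h)).pow hN
  have hNM : 1 ≤ N * M := Nat.mul_pos hN hM
  rw [hG.axisReturns_pow hN, ← pow_mul] at hside
  obtain ⟨y, hy⟩ := hfin.exists_notMem
  rw [← hG.axisReturns_pow hNM] at hside hy hfix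
  exact (hG.pow (N * M)).not_nonwandering_of_oneSided
    (fun z hz ↦ pow_mul G N M ▸ homeomorph_pow_apply_of_fixed (hfix z hz) M) hside hy
    (hwander _ hNM)

end Reversible

end Order

/-! ### Homeomorphisms commuting with the deck transformations -/

/-- The deck transformation `(x, y) ↦ (x + 1, y)` of the strip. -/
def shift : Strip Y ≃ₜ Strip Y := (Homeomorph.addRight (1 : ℝ)).prodCongr (Homeomorph.refl Y)

lemma shift_apply (u : Strip Y) : shift u = (u.1 + 1, u.2) := rfl

lemma shift_zpow_apply (k : ℤ) (u : Strip Y) : (shift ^ k) u = (u.1 + k, u.2) := by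
  have hnat : ∀ (n : ℕ) (u : Strip Y), (shift ^ n) u = (u.1 + n, u.2) := fun n u ↦ by
    induction n with
    | zero => simp
    | succ n ih => rw [pow_succ', Homeomorph.mul_apply, ih, shift_apply]; simp [add_assoc]
  obtain ⟨n, rfl | rfl⟩ := k.eq_nat_or_neg
  · simp [hnat]
  · rw [zpow_neg, zpow_natCast, Homeomorph.inv_apply, Homeomorph.symm_apply_eq, hnat]
    simp

lemma semiconjBy_mirror_shift : SemiconjBy (mirror : Strip Y ≃ₜ Strip Y) shift shift⁻¹ := by
  rw [SemiconjBy, ← zpow_neg_one]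
  ext u <;> simp only [Homeomorph.mul_apply, shift_zpow_apply, shift_apply, mirror_apply,
    Int.cast_neg, Int.cast_one, neg_add]

lemma apply_shift_zpow {K : Strip Y ≃ₜ Strip Y} (hK : Commute K shift) (k : ℤ) (u : Strip Y) :
    K ((shift ^ k) u) = (shift ^ k) (K u) := DFunLike.congr_fun (hK.zpow_right k).eq u

section BoundedDisplacement

variable {G K : Strip Y ≃ₜ Strip Y}

lemma exists_axis_fst_le (hK : Commute K shift) {u : Strip Y} (hu : 0 ≤ u.1) :
    ∃ r, (K (axis r)).1 ≤ (K u).1 := by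
  obtain ⟨m, hm⟩ := exists_nat_ge u.1
  have hpath : Continuous fun t : ℝ ↦ (K⁻¹ ((K u).1 - t, (K u).2)).1 :=
    continuous_fst.comp ((K⁻¹).continuous.comp (by fun_prop))
  have hstart : (K⁻¹ ((K u).1 - 0, (K u).2)).1 = u.1 := by simp
  have hend : (K⁻¹ ((K u).1 - m, (K u).2)).1 = u.1 - m := by
    have hmove : ((K u).1 - m, (K u).2) = (shift ^ (-m : ℤ)) (K u) := by
      rw [shift_zpow_apply]
      push_cast
      rw [sub_eq_add_neg]
    rw [hmove, apply_shift_zpow hK.inv_left, Homeomorph.inv_apply, K.symm_apply_apply,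
      shift_zpow_apply]
    push_cast
    rw [sub_eq_add_neg]
  obtain ⟨t, ht, h0⟩ := intermediate_value_Icc' m.cast_nonneg hpath.continuousOn
    (show (0 : ℝ) ∈ Icc _ _ by rw [hstart, hend]; exact ⟨by linarith, hu⟩)
  refine ⟨(K⁻¹ ((K u).1 - t, (K u).2)).2, ?_⟩
  rw [axis_snd_of_fst_eq_zero h0, Homeomorph.inv_apply, K.apply_symm_apply]
  exact sub_le_self _ ht.1

lemma exists_le_axis_fst (hK : Commute K shift) {u : Strip Y} (hu : u.1 ≤ 0) :
    ∃ r, (K u).1 ≤ (K (axis r)).1 := by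
  have hconj : Commute (mirror * K * mirror) shift := by
    have hinv : SemiconjBy (mirror : Strip Y ≃ₜ Strip Y) shift⁻¹ shift := by
      simpa using semiconjBy_mirror_shift.inv_right (G := Strip Y ≃ₜ Strip Y)
    exact (hinv.mul_left hK.inv_right).mul_left semiconjBy_mirror_shift
  obtain ⟨r, hr⟩ := exists_axis_fst_le hconj (u := mirror u) (by simpa [mirror_apply] using hu)
  refine ⟨r, ?_⟩
  simpa [mirror_axis, mirror_mirror, mirror_apply (K _)] using hr

lemma displacement_sub_displacement_le (hK : Commute K shift) {W : ℝ}
    (hW : ∀ r r', (K (axis r)).1 - (K (axis r')).1 ≤ W) (u v : Strip Y) :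
    ((K u).1 - u.1) - ((K v).1 - v.1) ≤ W + 2 := by
  obtain ⟨r, hr⟩ := exists_le_axis_fst hK (u := (shift ^ (-⌈u.1⌉)) u) (by
    rw [shift_zpow_apply]
    push_cast
    linarith [Int.le_ceil u.1])
  obtain ⟨r', hr'⟩ := exists_axis_fst_le hK (u := (shift ^ (-⌊v.1⌋)) v) (by
    rw [shift_zpow_apply]
    push_cast
    linarith [Int.floor_le v.1])
  rw [apply_shift_zpow hK, shift_zpow_apply] at hr hr'
  push_cast at hr hr'
  linarith [hW r r', Int.ceil_lt_add_one u.1, Int.lt_floor_add_one v.1]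

lemma abs_displacement_le (hK : Commute K shift) {W : ℝ}
    (hW : ∀ r r', (K (axis r)).1 - (K (axis r')).1 ≤ W) {z : Strip Y} (hz : K z = z)
    (u : Strip Y) : |(K u).1 - u.1| ≤ W + 2 := by
  have h1 := displacement_sub_displacement_le hK hW u z
  have h2 := displacement_sub_displacement_le hK hW z u
  rw [hz] at h1 h2
  exact abs_le.2 ⟨by linarith, by linarith⟩

/-- The heights of the points of the axis some iterate of which lies on a translate of the axis. -/
def latticeReturns (G : Strip Y ≃ₜ Strip Y) : Set Y :=
  {y | ∃ n, 1 ≤ n ∧ ∃ k : ℤ, ((G ^ n) (axis y)).1 = k}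

lemma axisReturns_subset_latticeReturns : axisReturns G ⊆ latticeReturns G :=
  fun _ ⟨n, hn, h⟩ ↦ ⟨n, hn, 0, by simpa using h⟩

variable [PreconnectedSpace Y]

lemma pow_axis_fst_sub_le_card (hfin : (latticeReturns G).Finite) {n : ℕ} (hn : 1 ≤ n)
    (r r' : Y) :
    ((G ^ n) (axis r)).1 - ((G ^ n) (axis r')).1 ≤ hfin.toFinset.card + 1 := by
  set b := ((G ^ n) (axis r)).1
  set a := ((G ^ n) (axis r')).1
  have hhit : ∀ k ∈ Finset.Icc ⌈a⌉ ⌊b⌋, ∃ s, ((G ^ n) (axis s)).1 = k := fun k hk ↦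
    intermediate_value_univ r' r (continuous_pow_axis_fst G n)
      ⟨Int.ceil_le.1 (Finset.mem_Icc.1 hk).1, Int.le_floor.1 (Finset.mem_Icc.1 hk).2⟩
  have : Nonempty Y := ⟨r⟩
  choose! s hs using hhit
  have hcard : (Finset.Icc ⌈a⌉ ⌊b⌋).card ≤ hfin.toFinset.card :=
    Finset.card_le_card_of_injOn s
      (fun k hk ↦ hfin.mem_toFinset.2 ⟨n, hn, k, hs k hk⟩)
      fun k hk l hl h ↦ by exact_mod_cast (hs k hk).symm.trans (h ▸ hs l hl)
  rw [Int.card_Icc] at hcard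
  have hcount : (⌊b⌋ : ℝ) + 1 - ⌈a⌉ ≤ hfin.toFinset.card := by
    exact_mod_cast (by omega : ⌊b⌋ + 1 - ⌈a⌉ ≤ hfin.toFinset.card)
  linarith [Int.lt_floor_add_one b, Int.ceil_lt_add_one a]

lemma exists_abs_pow_displacement_le (hG : Commute G shift) (hfin : (latticeReturns G).Finite)
    {z : Strip Y} (hz : G z = z) : ∃ B : ℝ, ∀ n, 1 ≤ n → ∀ u, |((G ^ n) u).1 - u.1| ≤ B :=
  ⟨_, fun n hn ↦ abs_displacement_le (hG.pow_left n) (pow_axis_fst_sub_le_card hfin hn)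
    (homeomorph_pow_apply_of_fixed hz n)⟩

end BoundedDisplacement

/-! ### Recurrence modulo the deck transformations -/

/-- Every nonempty open set contains a point that comes back to it infinitely often, up to deck
transformations: Poincaré recurrence of the map induced on the quotient by `shift`. -/
def RecurrentModShift (G : Strip Y ≃ₜ Strip Y) : Prop :=
  ∀ C : Set (Strip Y), IsOpen C → C.Nonempty →
    ∃ w ∈ C, ∃ᶠ n in atTop, ∃ k : ℤ, (shift ^ k) ((G ^ n) w) ∈ C

section Recurrence

variable {F G : Strip Y ≃ₜ Strip Y}

lemma RecurrentModShift.nonwandering (hrec : RecurrentModShift G) (hG : Commute G shift) {B : ℝ}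
    (hB : ∀ n, 1 ≤ n → ∀ u, |((G ^ n) u).1 - u.1| ≤ B) : Nonwandering G := by
  rintro C hC ⟨c, hc⟩
  obtain ⟨z, ⟨-, hz⟩, hfreq⟩ := hrec (C ∩ {u | |u.1 - c.1| < 1})
    (hC.inter (isOpen_lt (by fun_prop) continuous_const)) ⟨c, hc, by simp⟩
  have hbounded : ∀ n, 1 ≤ n → ∀ k : ℤ,
      (shift ^ k) ((G ^ n) z) ∈ {u : Strip Y | |u.1 - c.1| < 1} →
      k ∈ Icc (-⌈B + 2⌉) ⌈B + 2⌉ := by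
    intro n hn k hk
    have hk' : |((G ^ n) z).1 + k - c.1| < 1 := by simpa [shift_zpow_apply] using hk
    have hz' : |z.1 - c.1| < 1 := hz
    have hBz := abs_le.1 (hB n hn z)
    rw [abs_lt] at hk' hz'
    have hle : (k : ℝ) ≤ ⌈B + 2⌉ := by linarith [Int.le_ceil (B + 2)]
    have hge : -(⌈B + 2⌉ : ℝ) ≤ k := by linarith [Int.le_ceil (B + 2)]
    exact ⟨by exact_mod_cast hge, by exact_mod_cast hle⟩
  have hinf := Nat.frequently_atTop_iff_infinite.1 (hfreq.and_eventually (eventually_ge_atTop 1))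
  choose! κ hκ using fun (n : ℕ) (hn : ∃ k : ℤ, (shift ^ k) ((G ^ n) z) ∈ C ∩ _) ↦ hn
  obtain ⟨m, hm, n, hn, hlt, heq⟩ := hinf.exists_lt_map_eq_of_mapsTo
    (fun n hn ↦ hbounded n hn.2 _ (hκ n hn.1).2) (finite_Icc (-⌈B + 2⌉) ⌈B + 2⌉)
  refine ⟨n - m, by omega, _, (hκ m hm.1).1, ?_⟩
  rw [apply_shift_zpow (hG.pow_left _), ← Homeomorph.mul_apply (G ^ _), ← pow_add,
    Nat.sub_add_cancel hlt.le, heq]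
  exact (hκ n hn.1).1

lemma shift_zpow_mul_pow (hF : Commute F shift) (k : ℤ) (n : ℕ) :
    (shift ^ k * F) ^ n = shift ^ (k * n) * F ^ n := by
  rw [(hF.zpow_right k).symm.mul_pow, zpow_mul, zpow_natCast]

lemma RecurrentModShift.shift_zpow_mul (hrec : RecurrentModShift F) (hF : Commute F shift) (k : ℤ) :
    RecurrentModShift (shift ^ k * F) := by
  intro C hC hne
  obtain ⟨w, hw, hfreq⟩ := hrec C hC hne
  refine ⟨w, hw, hfreq.mono ?_⟩
  rintro n ⟨l, hl⟩
  refine ⟨l - k * n, ?_⟩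
  rwa [shift_zpow_mul_pow hF, Homeomorph.mul_apply, ← Homeomorph.mul_apply, ← zpow_add,
    sub_add_cancel]

lemma latticeReturns_shift_zpow_mul_pow_subset (hF : Commute F shift) (k : ℤ) {q : ℕ}
    (hq : 1 ≤ q) : latticeReturns (shift ^ k * F ^ q) ⊆ latticeReturns F := by
  rintro y ⟨n, hn, l, h⟩
  refine ⟨q * n, Nat.mul_pos hq hn, l - k * n, ?_⟩
  rw [shift_zpow_mul_pow (hF.pow_left q), Homeomorph.mul_apply, shift_zpow_apply, ← pow_mul] at h
  push_cast at h ⊢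
  linarith

lemma Reversible.shift_zpow_mul (hF : Reversible F) (hT : Commute F shift) (k : ℤ) :
    Reversible (shift ^ k * F) := by
  have hinv : (shift ^ k * F)⁻¹ = shift⁻¹ ^ k * F⁻¹ := by
    rw [mul_inv_rev, inv_zpow, (hT.zpow_right k).inv_inv.eq]
  rw [Reversible, hinv]
  exact (semiconjBy_mirror_shift.zpow_right k).mul_right hF

end Recurrence

/-! ### Invariant lines -/

section InvariantLine

variable {F G : Strip Y ≃ₜ Strip Y} {b : Y}

lemma strictMono_fst_of_invariant_line (hG : Commute G shift) (hline : ∀ x, (G (x, b)).2 = b) :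
    StrictMono fun x ↦ (G (x, b)).1 := by
  have hcont : Continuous fun x ↦ (G (x, b)).1 :=
    continuous_fst.comp (G.continuous.comp (by fun_prop))
  have hinj : Injective fun x ↦ (G (x, b)).1 := fun x x' h ↦
    congrArg Prod.fst (G.injective (Prod.ext h ((hline x).trans (hline x').symm)))
  refine (hcont.strictMono_of_inj hinj).resolve_right fun hanti ↦ ?_
  have hone : (G (1, b)).1 = (G (0, b)).1 + 1 := by
    simpa [shift_apply] using congrArg Prod.fst (apply_shift_zpow hG 1 (0, b))
  linarith [hanti zero_lt_one]

lemma pow_apply_of_invariant_line (hline : ∀ x, (G (x, b)).2 = b) (n : ℕ) (x : ℝ) :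
    (G ^ n) (x, b) = ((fun x ↦ (G (x, b)).1)^[n] x, b) := by
  induction n with
  | zero => rfl
  | succ n ih =>
    rw [pow_succ', Homeomorph.mul_apply, ih, iterate_succ_apply']
    exact Prod.ext rfl (hline _)

lemma Reversible.oneSided_of_invariant_line (hG : Reversible G) (hT : Commute G shift)
    (hline : ∀ x, (G (x, b)).2 = b) (hb : b ∉ axisReturns G) : OneSided G b := by
  have hmono := strictMono_fst_of_invariant_line hT hline
  have hpow : ∀ n, ((G ^ n) (axis b)).1 = (fun x ↦ (G (x, b)).1)^[n] 0 := fun n ↦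
    congrArg Prod.fst (pow_apply_of_invariant_line hline n 0)
  rcases lt_trichotomy (G (0, b)).1 0 with h | h | h
  · refine .inr (hG.rightMoving_inv_iff.2 fun n hn ↦ ?_)
    rw [hpow]
    exact hmono.strictAnti_iterate_of_map_lt h hn
  · exact absurd ⟨1, le_rfl, h⟩ hb
  · refine .inl fun n hn ↦ ?_
    rw [hpow]
    exact hmono.strictMono_iterate_of_lt_map h hn

end InvariantLine

theorem Reversible.infinite_latticeReturns [ConditionallyCompleteLinearOrder Y] [OrderTopology Y]
    [DenselyOrdered Y] [OrderBot Y] [Infinite Y] [PreconnectedSpace Y] {F : Strip Y ≃ₜ Strip Y}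
    (hF : Reversible F) (hT : Commute F shift) (hbot : ∀ x, (F (x, ⊥)).2 = ⊥)
    (hrec : ∀ N, RecurrentModShift (F ^ N)) {z : Strip Y} {q : ℕ} (hq : 1 ≤ q) {p : ℤ}
    (hz : (F ^ q) z = (shift ^ p) z) : (latticeReturns F).Infinite := by
  intro hfin
  set G : Strip Y ≃ₜ Strip Y := shift ^ (-p) * F ^ q with hG
  have hTq : Commute (F ^ q) shift := hT.pow_left q
  have hGT : Commute G shift := ((Commute.refl shift).zpow_left _).mul_left hTq
  have hGrev : Reversible G := (hF.pow q).shift_zpow_mul hTq _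
  have hGz : G z = z := by
    rw [hG, Homeomorph.mul_apply, hz, ← Homeomorph.mul_apply, ← zpow_add]
    simp
  have hGbot : ∀ x, (G (x, ⊥)).2 = ⊥ := fun x ↦ by
    rw [hG, Homeomorph.mul_apply, pow_apply_of_invariant_line hbot, shift_zpow_apply]
  have hGfin := hfin.subset (latticeReturns_shift_zpow_mul_pow_subset hT (-p) hq)
  have hwander : ∀ N, 1 ≤ N → Nonwandering (G ^ N) := fun N hN ↦ by
    obtain ⟨B, hB⟩ := exists_abs_pow_displacement_le hGT hGfin hGz
    have hGrec : RecurrentModShift (G ^ N) := by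
      rw [hG, shift_zpow_mul_pow hTq, ← pow_mul]
      exact (hrec _).shift_zpow_mul (hT.pow_left _) _
    refine hGrec.nonwandering (B := B) (hGT.pow_left N) fun n hn u ↦ ?_
    rw [← pow_mul]
    exact hB _ (Nat.mul_pos hN hn) u
  exact hGrev.infinite_axisReturns (hGrev.oneSided_of_invariant_line hGT hGbot) hwander
    (hGfin.subset axisReturns_subset_latticeReturns)

end Strip

/-! ### Invariance of the boundary -/

lemma exists_continuous_exp_eq {X : Type*} [TopologicalSpace X] [ContractibleSpace X] {φ : X → ℂ}
    (hφ : Continuous φ) (h0 : ∀ x, φ x ≠ 0) :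
    ∃ L : X → ℂ, Continuous L ∧ ∀ x, Complex.exp (L x) = φ x := by
  obtain ⟨c, hc⟩ := id_nullhomotopic X
  obtain ⟨K⟩ := hc.symm
  let H : C(unitInterval × X, {z : ℂ // z ≠ 0}) :=
    ⟨fun p ↦ ⟨φ (K p), h0 _⟩, (hφ.comp K.continuous).subtype_mk _⟩
  let L₀ : C(X, ℂ) := .const X (Complex.log (φ c))
  have hL₀ : ∀ x, H (0, x) = (⟨_, (L₀ x).exp_ne_zero⟩ : {z : ℂ // z ≠ 0}) := fun x ↦
    Subtype.ext (by simp [H, L₀, Complex.exp_log (h0 c)])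
  set L := Complex.isCoveringMap_exp.liftHomotopy H L₀ hL₀
  refine ⟨fun x ↦ L (1, x), by fun_prop, fun x ↦ ?_⟩
  have hlift := congrFun (Complex.isCoveringMap_exp.liftHomotopy_lifts H L₀ hL₀) (1, x)
  exact (congrArg Subtype.val hlift).trans (congrArg φ (K.apply_one x))

lemma eq_of_exp_comp_eq {X : Type*} [TopologicalSpace X] [PreconnectedSpace X] {g : X → ℂ}
    (hg : Continuous g) (h : ∀ x y, Complex.exp (g x) = Complex.exp (g y)) (x y : X) :
    g x = g y :=
  Complex.isCoveringMap_exp.const_of_comp hg (fun x y ↦ Subtype.ext (h x y)) x y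

lemma not_contractibleSpace_ne {s : Set ℂ} {w : s} (hw : (w : ℂ) ∈ interior s) :
    ¬ ContractibleSpace {u : s // u ≠ w} := by
  intro
  obtain ⟨L, hL, hexp⟩ := exists_continuous_exp_eq
    (φ := fun u : {u : s // u ≠ w} ↦ ((u : s) : ℂ) - w) (by fun_prop)
    fun u ↦ sub_ne_zero.2 fun h ↦ u.2 (Subtype.ext h)
  obtain ⟨η, hη, hball⟩ :=
    Metric.nhds_basis_closedBall.mem_iff.1 (mem_interior_iff_mem_nhds.1 hw)
  let loop : ℝ → {u : s // u ≠ w} := fun θ ↦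
    ⟨⟨circleMap w η θ, hball (circleMap_mem_closedBall _ hη.le θ)⟩,
      fun h ↦ circleMap_ne_center hη.ne' (congrArg Subtype.val h)⟩
  have hloop : Continuous loop := ((continuous_circleMap w η).subtype_mk _).subtype_mk _
  have hperiodic : loop (2 * Real.pi) = loop 0 :=
    Subtype.ext (Subtype.ext (by simpa using periodic_circleMap w η 0))
  have hangle : ∀ θ, Complex.exp (L (loop θ) - θ * Complex.I) = η := fun θ ↦ by
    rw [Complex.exp_sub, hexp, circleMap_sub_center, circleMap_zero,
      mul_div_cancel_right₀ _ (Complex.exp_ne_zero _)]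
  have hconst := eq_of_exp_comp_eq (g := fun θ : ℝ ↦ L (loop θ) - θ * Complex.I) (by fun_prop)
    (fun θ θ' ↦ (hangle θ).trans (hangle θ').symm) (2 * Real.pi) 0
  simp [hperiodic] at hconst

section StarConvex

variable {E : Type*} [AddCommGroup E] [Module ℝ E] [TopologicalSpace E] [IsTopologicalAddGroup E]
  [ContinuousSMul ℝ E] {s : Set E}

lemma starConvex_diff_singleton (hs : Convex ℝ s) {c z : E} (hc : c ∈ interior s)
    (hz : z ∉ interior s) : StarConvex ℝ c (s \ {z}) := by
  intro u hu a b ha hb hab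
  refine ⟨hs (interior_subset hc) hu.1 ha hb hab, fun h ↦ ?_⟩
  rcases ha.eq_or_lt with rfl | ha
  · rw [zero_add] at hab
    exact hu.2 (by simpa [hab] using h)
  · exact hz (h ▸ hs.combo_interior_self_mem_interior hc hu.1 ha hb hab)

lemma contractibleSpace_ne (hs : Convex ℝ s) (hne : (interior s).Nonempty) {z : s}
    (hz : (z : E) ∉ interior s) : ContractibleSpace {u : s // u ≠ z} := by
  obtain ⟨c, hc⟩ := hne
  have hcz : c ∈ s \ {(z : E)} := ⟨interior_subset hc, fun h ↦ hz (h ▸ hc)⟩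
  have := (starConvex_diff_singleton hs hc hz).contractibleSpace ⟨c, hcz⟩
  have hemb : IsEmbedding fun u : {u : s // u ≠ z} ↦ ((u : s) : E) :=
    IsEmbedding.subtypeVal.comp .subtypeVal
  have hrange : range (fun u : {u : s // u ≠ z} ↦ ((u : s) : E)) = s \ {(z : E)} := by
    ext x
    simp [Subtype.ext_iff, and_comm]
  exact (hemb.toHomeomorph.trans (.setCongr hrange)).contractibleSpace

end StarConvex

/-- A boundary point of a planar convex set is one whose removal leaves a contractible set. -/
theorem homeomorph_apply_notMem_interior {s t : Set ℂ} (hs : Convex ℝ s)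
    (hne : (interior s).Nonempty) (h : s ≃ₜ t) {z : s} (hz : (z : ℂ) ∉ interior s) :
    (h z : ℂ) ∉ interior t := fun hw ↦
  have := contractibleSpace_ne hs hne hz
  not_contractibleSpace_ne hw
    (h.symm.subtype (q := (· ≠ z)) fun _ ↦ h.symm_apply_eq.not.symm).contractibleSpace

namespace Strip

lemma sq_apply_snd_of_mapsTo {Y : Type*} [TopologicalSpace Y] [T1Space Y] {a b : Y}
    {Φ : Strip Y ≃ₜ Strip Y}
    (hΦ : ∀ u, (Φ u).2 = a ∨ (Φ u).2 = b ↔ u.2 = a ∨ u.2 = b) (x : ℝ) :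
    ((Φ ^ 2) (x, a)).2 = a := by
  have hline : ∀ u v : Strip Y, u.2 = v.2 → (u.2 = a ∨ u.2 = b) → (Φ u).2 = (Φ v).2 := by
    rintro ⟨x, y⟩ ⟨x', y'⟩ rfl hy
    exact isPreconnected_univ.constant_of_mapsTo (T := {a, b}) (toFinite _).isDiscrete
      (f := fun x ↦ (Φ (x, y)).2)
      (continuous_snd.comp (Φ.continuous.comp (by fun_prop))).continuousOn
      (fun x _ ↦ (hΦ (x, y)).2 hy) (mem_univ x) (mem_univ x')
  rw [sq, Homeomorph.mul_apply]
  set u : Strip Y := (x, a)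
  have hu : u.2 = a := rfl
  obtain ⟨v, hv⟩ := Φ.surjective u
  have hv_line : v.2 = a ∨ v.2 = b := (hΦ v).1 (hv ▸ .inl hu)
  rcases (hΦ u).2 (.inl hu) with h | h
  · rw [hline _ u (h.trans hu.symm) (.inl h), h]
  · rcases hv_line with hva | hvb
    · have : (Φ v).2 = (Φ u).2 := hline v u (hva.trans hu.symm) (.inl hva)
      rw [hv, h] at this
      rw [hline _ v (h.trans (this ▸ hva.symm)) (.inr h), hv]
    · rw [hline _ v (h.trans hvb.symm) (.inr h), hv]

end Strip

/-! ### The universal cover of the annulus -/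

lemma continuous_enorm2 : Continuous enorm2 := by
  unfold enorm2
  fun_prop

instance fact_one_le_two : Fact ((1 : ℝ) ≤ 2) := ⟨one_le_two⟩

instance connectedSpace_Icc_one_two : ConnectedSpace (Icc (1 : ℝ) 2) :=
  Subtype.connectedSpace (isConnected_Icc one_le_two)

instance infinite_Icc_one_two : Infinite (Icc (1 : ℝ) 2) := (Icc_infinite one_lt_two).to_subtype

/-- The universal cover of the annulus: the strip of pairs (angle in turns, radius). -/
abbrev AnnulusCover := Strip (Icc (1 : ℝ) 2)

namespace AnnulusCover

open Strip

/-- The annulus cover as a horizontal strip in the complex plane. -/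
def planar : AnnulusCover ≃ₜ (univ ×ℂ Icc (1 : ℝ) 2 : Set ℂ) :=
  (((Homeomorph.Set.univ ℝ).symm.prodCongr (.refl _)).trans (Homeomorph.Set.prod _ _).symm).trans
    (Complex.equivRealProdCLM.symm.toHomeomorph.subtype fun _ ↦ Iff.rfl)

lemma coe_planar (u : AnnulusCover) : (planar u : ℂ) = ⟨u.1, u.2⟩ := rfl

lemma planar_notMem_interior_iff {u : AnnulusCover} :
    (planar u : ℂ) ∉ interior (univ ×ℂ Icc (1 : ℝ) 2) ↔ u.2 = ⊥ ∨ u.2 = ⊤ := by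
  rw [Complex.interior_reProdIm, interior_univ, interior_Icc, Complex.mem_reProdIm, coe_planar,
    ← not_iff_not, not_or, not_not, ← Ne, ← Ne, ← bot_lt_iff_ne_bot, ← lt_top_iff_ne_top]
  simp [← Subtype.coe_lt_coe]

lemma apply_snd_eq_bot_or_top (Φ : AnnulusCover ≃ₜ AnnulusCover) {u : AnnulusCover}
    (hu : u.2 = ⊥ ∨ u.2 = ⊤) : (Φ u).2 = ⊥ ∨ (Φ u).2 = ⊤ := by
  rw [← planar_notMem_interior_iff] at hu ⊢
  have hne : (interior (univ ×ℂ Icc (1 : ℝ) 2)).Nonempty := by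
    rw [Complex.interior_reProdIm, interior_univ, interior_Icc]
    exact ⟨⟨0, 3 / 2⟩, trivial, by norm_num⟩
  have hconvex : Convex ℝ (univ ×ℂ Icc (1 : ℝ) 2) := 
    (convex_univ.linear_preimage Complex.reLm).inter ((convex_Icc 1 2).linear_preimage Complex.imLm)
  have h := homeomorph_apply_notMem_interior hconvex hne (planar.symm.trans (Φ.trans planar)) hu
  simpa only [Homeomorph.trans_apply, Homeomorph.symm_apply_apply] using h

lemma sq_apply_bot (Φ : AnnulusCover ≃ₜ AnnulusCover) (x : ℝ) : ((Φ ^ 2) (x, ⊥)).2 = ⊥ :=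
  sq_apply_snd_of_mapsTo (fun u ↦ ⟨fun h ↦ Φ.symm_apply_apply u ▸ apply_snd_eq_bot_or_top Φ.symm h,
    apply_snd_eq_bot_or_top Φ⟩) x

/-- A point of the plane seen as a complex number, with the axis of the reflection as the real
axis. -/
def toComplex (p : ℝ × ℝ) : ℂ := ⟨p.2, p.1⟩

lemma toComplex_injective : Injective toComplex := fun _ _ h ↦
  Prod.ext (congrArg Complex.im h) (congrArg Complex.re h)

lemma continuous_toComplex : Continuous toComplex :=
  (Complex.equivRealProdCLM.symm.continuous.comp continuous_swap :)

lemma norm_toComplex (p : ℝ × ℝ) : ‖toComplex p‖ = enorm2 p := by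
  rw [Complex.norm_eq_sqrt_sq_add_sq, enorm2, toComplex, add_comm]

lemma toComplex_ne_zero (a : annulus) : toComplex a ≠ 0 := by
  rw [← norm_pos_iff, norm_toComplex]
  exact one_pos.trans_le a.2.1

/-- The radius of a point of the annulus. -/
def radius (a : annulus) : Icc (1 : ℝ) 2 := ⟨enorm2 a, a.2⟩

lemma continuous_radius : Continuous radius :=
  (continuous_enorm2.comp continuous_subtype_val).subtype_mk _

/-- Polar coordinates in the plane, the angle being measured in turns from the axis of the
reflection. -/
def polar (u : AnnulusCover) : ℝ × ℝ :=
  (u.2 * Real.sin (2 * Real.pi * u.1), u.2 * Real.cos (2 * Real.pi * u.1))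

lemma toComplex_polar (u : AnnulusCover) :
    toComplex (polar u) = (u.2 : ℝ) * Complex.exp ((2 * Real.pi * u.1 : ℝ) * Complex.I) := by
  apply Complex.ext
  · rw [Complex.re_ofReal_mul, Complex.exp_ofReal_mul_I_re, toComplex, polar]
  · rw [Complex.im_ofReal_mul, Complex.exp_ofReal_mul_I_im, toComplex, polar]

lemma enorm2_polar (u : AnnulusCover) : enorm2 (polar u) = u.2 := by
  rw [← norm_toComplex, toComplex_polar, norm_mul, Complex.norm_exp_ofReal_mul_I, mul_one,
    Complex.norm_of_nonneg (zero_le_one.trans u.2.2.1)]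

/-- The covering map from the strip to the annulus. -/
def proj (u : AnnulusCover) : annulus := ⟨polar u, by
  change 1 ≤ enorm2 (polar u) ∧ enorm2 (polar u) ≤ 2
  rw [enorm2_polar]
  exact u.2.2⟩

lemma coe_proj (u : AnnulusCover) : (proj u : ℝ × ℝ) = polar u := rfl

lemma continuous_proj : Continuous proj := by
  refine Continuous.subtype_mk ?_ _
  unfold polar
  fun_prop

lemma radius_proj (u : AnnulusCover) : radius (proj u) = u.2 := Subtype.ext (enorm2_polar u)

lemma proj_mirror (u : AnnulusCover) : proj (mirror u) = IA (proj u) := by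
  apply Subtype.ext
  simp [coe_proj, polar, IA, refl2, mirror_apply]

lemma proj_of_exp_eq {a : annulus} {ℓ : ℂ} (h : Complex.exp ℓ = toComplex a) :
    proj (ℓ.im / (2 * Real.pi), radius a) = a := by
  apply Subtype.ext
  apply toComplex_injective
  have hradius : ((radius a : ℝ) : ℂ) = Complex.exp ℓ.re := by
    rw [radius, ← Complex.ofReal_exp, ← Complex.norm_exp, h, norm_toComplex]
  rw [coe_proj, toComplex_polar, hradius, ← Complex.exp_add,
    mul_div_cancel₀ _ Real.two_pi_pos.ne', Complex.re_add_im, h]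

lemma proj_surjective : Surjective proj := fun a ↦
  ⟨_, proj_of_exp_eq (Complex.exp_log (toComplex_ne_zero a))⟩

lemma proj_shift_zpow (k : ℤ) (u : AnnulusCover) : proj ((shift ^ k) u) = proj u := by
  apply Subtype.ext
  have hangle : 2 * Real.pi * (u.1 + k) = 2 * Real.pi * u.1 + k * (2 * Real.pi) := by ring
  simp only [coe_proj, polar, shift_zpow_apply, hangle, Real.sin_add_int_mul_two_pi,
    Real.cos_add_int_mul_two_pi]

lemma exists_eq_shift_zpow_of_proj_eq {u v : AnnulusCover} (h : proj u = proj v) :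
    ∃ k : ℤ, u = (shift ^ k) v := by
  have hradius : u.2 = v.2 := by rw [← radius_proj, h, radius_proj]
  have hpolar : toComplex (polar u) = toComplex (polar v) :=
    congrArg (fun a : annulus ↦ toComplex a) h
  have hv : ((v.2 : ℝ) : ℂ) ≠ 0 := Complex.ofReal_ne_zero.2 (one_pos.trans_le v.2.2.1).ne'
  rw [toComplex_polar, toComplex_polar, hradius] at hpolar
  obtain ⟨k, hk⟩ := Complex.exp_eq_exp_iff_exists_int.1 (mul_left_cancel₀ hv hpolar)
  refine ⟨k, Prod.ext ?_ (by rw [shift_zpow_apply, hradius])⟩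
  have him : 2 * Real.pi * u.1 = 2 * Real.pi * v.1 + k * (2 * Real.pi) := by
    simpa using congrArg Complex.im hk
  rw [shift_zpow_apply]
  exact mul_left_cancel₀ Real.two_pi_pos.ne' (him.trans (by ring))

lemma isOpenMap_proj : IsOpenMap proj := by
  refine .of_sections fun c ↦ ?_
  -- The section at `proj c` uses the branch of the logarithm that is cut opposite to `proj c`.
  set ρ : ℂ := ((2 * Real.pi * c.1 : ℝ) : ℂ) * Complex.I with hρ
  set ℓ : annulus → ℂ := fun a ↦ Complex.log (toComplex a * Complex.exp (-ρ)) + ρ with hℓ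
  have hexp : ∀ a, Complex.exp (ℓ a) = toComplex a := fun a ↦ by
    rw [hℓ, Complex.exp_add, Complex.exp_log (mul_ne_zero (toComplex_ne_zero a)
      (Complex.exp_ne_zero _)), mul_assoc, ← Complex.exp_add, neg_add_cancel, Complex.exp_zero,
      mul_one]
  have hval : toComplex (proj c) * Complex.exp (-ρ) = (c.2 : ℝ) := by
    rw [coe_proj, toComplex_polar, mul_assoc, ← Complex.exp_add, add_neg_cancel, Complex.exp_zero,
      mul_one]
  have hpos : 0 < (c.2 : ℝ) := one_pos.trans_le c.2.2.1
  have hcont : ContinuousAt ℓ (proj c) := by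
    refine ContinuousAt.add (ContinuousAt.clog ?_ ?_) continuousAt_const
    · exact ((continuous_toComplex.comp continuous_subtype_val).mul continuous_const).continuousAt
    · rw [hval]
      exact Complex.ofReal_mem_slitPlane.2 hpos
  refine ⟨fun a ↦ ((ℓ a).im / (2 * Real.pi), radius a), ?_, ?_, fun a ↦ proj_of_exp_eq (hexp a)⟩
  · exact ((Complex.continuous_im.continuousAt.comp hcont).div_const _).prodMk
      continuous_radius.continuousAt
  · have him : (ℓ (proj c)).im = 2 * Real.pi * c.1 := by
      simp only [hℓ, hval]
      rw [Complex.add_im, ← Complex.ofReal_log hpos.le, Complex.ofReal_im, zero_add, hρ,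
        Complex.im_ofReal_mul, Complex.I_im, mul_one]
    simp only [radius_proj, him, mul_div_cancel_left₀ _ Real.two_pi_pos.ne']

lemma exists_continuous_lift {φ : AnnulusCover → annulus} (hφ : Continuous φ) :
    ∃ Φ : AnnulusCover → AnnulusCover, Continuous Φ ∧ ∀ u, proj (Φ u) = φ u := by
  have := (convex_Icc (1 : ℝ) 2).contractibleSpace ⟨1, left_mem_Icc.2 one_le_two⟩
  obtain ⟨L, hL, hexp⟩ := exists_continuous_exp_eq
    (continuous_toComplex.comp (continuous_subtype_val.comp hφ)) fun u ↦ toComplex_ne_zero (φ u)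
  exact ⟨fun u ↦ ((L u).im / (2 * Real.pi), radius (φ u)),
    ((Complex.continuous_im.comp hL).div_const _).prodMk (continuous_radius.comp hφ),
    fun u ↦ proj_of_exp_eq (hexp u)⟩

lemma exists_eq_shift_zpow_comp {Φ Ψ : AnnulusCover → AnnulusCover} (hΦ : Continuous Φ)
    (hΨ : Continuous Ψ) (h : ∀ u, proj (Φ u) = proj (Ψ u)) :
    ∃ k : ℤ, ∀ u, Φ u = (shift ^ k) (Ψ u) := by
  choose k hk using fun u ↦ exists_eq_shift_zpow_of_proj_eq (h u)
  have hcoe : ∀ u, (k u : ℝ) = (Φ u).1 - (Ψ u).1 := fun u ↦ by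
    rw [hk u, shift_zpow_apply, add_sub_cancel_left]
  have hkcont : Continuous k := by
    refine Int.isClosedEmbedding_coe_real.continuous_iff.2 ?_
    simp only [comp_def, hcoe]
    fun_prop
  exact ⟨k (axis ⊥), fun u ↦ (PreconnectedSpace.constant inferInstance hkcont : k u = _) ▸ hk u⟩

lemma exists_eq_shift_zpow_mul {Φ Ψ : AnnulusCover ≃ₜ AnnulusCover}
    (h : ∀ u, proj (Φ u) = proj (Ψ u)) : ∃ k : ℤ, Φ = shift ^ k * Ψ :=
  (exists_eq_shift_zpow_comp Φ.continuous Ψ.continuous h).imp fun _ ↦ Homeomorph.ext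

lemma exists_homeomorph_lift (f : annulus ≃ₜ annulus) :
    ∃ Φ : AnnulusCover ≃ₜ AnnulusCover, Semiconj proj Φ f := by
  obtain ⟨Φ, hΦ, hlift⟩ := exists_continuous_lift (f.continuous.comp continuous_proj)
  obtain ⟨Ψ, hΨ, hlift'⟩ := exists_continuous_lift (f.symm.continuous.comp continuous_proj)
  obtain ⟨k, hk⟩ := exists_eq_shift_zpow_comp (hΦ.comp hΨ) continuous_id fun u ↦ by
    simp [hlift, hlift']
  obtain ⟨l, hl⟩ := exists_eq_shift_zpow_comp (hΨ.comp hΦ) continuous_id fun u ↦ by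
    simp [hlift, hlift']
  have hinj : Injective Φ :=
    .of_comp (f := Ψ) (by rw [funext hl]; exact (shift ^ l).injective)
  have hright : RightInverse (Ψ ∘ ⇑(shift ^ (-k))) Φ := fun u ↦ by
    have h := hk ((shift ^ (-k)) u)
    rwa [id, ← Homeomorph.mul_apply, ← zpow_add, add_neg_cancel, zpow_zero] at h
  exact ⟨{
    toFun := Φ
    invFun := Ψ ∘ ⇑(shift ^ (-k))
    left_inv := fun u ↦ hinj (hright (Φ u))
    right_inv := hright
    continuous_toFun := hΦ
    continuous_invFun := hΨ.comp (shift ^ (-k)).continuous }, hlift⟩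

section Lift

variable {f : annulus ≃ₜ annulus} {Φ : AnnulusCover ≃ₜ AnnulusCover}

lemma semiconj_proj_inv (hΦ : Semiconj proj Φ f) : Semiconj proj ⇑Φ⁻¹ f.symm :=
  hΦ.inverses_right Φ.apply_symm_apply f.symm_apply_apply

lemma semiconj_proj_pow (hΦ : Semiconj proj Φ f) (n : ℕ) : Semiconj proj ⇑(Φ ^ n) f^[n] :=
  homeomorph_coe_pow Φ n ▸ hΦ.iterate_right n

lemma exists_semiconjBy_shift_zpow (hΦ : Semiconj proj Φ f) :
    ∃ e : ℤ, SemiconjBy Φ shift (shift ^ e) :=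
  exists_eq_shift_zpow_mul fun u ↦ by
    rw [Homeomorph.mul_apply, hΦ, hΦ, ← zpow_one shift, proj_shift_zpow]

lemma commute_sq_shift (hΦ : Semiconj proj Φ f) : Commute (Φ ^ 2) shift := by
  have hinj : Injective fun n : ℤ ↦ (shift : AnnulusCover ≃ₜ AnnulusCover) ^ n := fun m n h ↦ by
    simpa [shift_zpow_apply] using congrArg Prod.fst (DFunLike.congr_fun h (axis ⊥))
  obtain ⟨e, he⟩ := exists_semiconjBy_shift_zpow hΦ
  obtain ⟨e', he'⟩ := exists_semiconjBy_shift_zpow (semiconj_proj_inv hΦ)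
  exact commute_sq_of_semiconjBy_zpow hinj he he'

lemma reversible_sq (hrev : ∀ z, f (IA z) = IA (f.symm z)) (hΦ : Semiconj proj Φ f) :
    Reversible (Φ ^ 2) := by
  obtain ⟨m, hm⟩ : ∃ m : ℤ, mirror * Φ = shift ^ m * (Φ⁻¹ * mirror) :=
    exists_eq_shift_zpow_mul fun u ↦ by
      rw [Homeomorph.mul_apply, Homeomorph.mul_apply, proj_mirror, hΦ, semiconj_proj_inv hΦ,
        proj_mirror, Homeomorph.eq_symm_apply, hrev, f.symm_apply_apply]
  refine semiconjBy_sq_inv_of_semiconjBy_mul_inv mirror_mul_mirror (a := shift ^ m) ?_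
    (hm.trans (mul_assoc _ _ _).symm)
  rw [← inv_zpow]
  exact semiconjBy_mirror_shift.zpow_right m

end Lift

lemma recurrentModShift_of_semiconj {μ : Measure annulus} [IsFiniteMeasure μ]
    [μ.IsOpenPosMeasure] {g : annulus → annulus} (hg : MeasurePreserving g μ μ)
    {G : AnnulusCover ≃ₜ AnnulusCover} (hG : Semiconj proj G g) : RecurrentModShift G := by
  intro C hC hne
  have hV : IsOpen (proj '' C) := isOpenMap_proj C hC
  have hfreq := frequently_ae_mem_iff.2 (hV.measure_ne_zero μ (hne.image proj))
  obtain ⟨_, ⟨w, hw, rfl⟩, hreturn⟩ := (hfreq.and_eventually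
    (hg.conservative.ae_mem_imp_frequently_image_mem hV.measurableSet.nullMeasurableSet)).exists
  refine ⟨w, hw, (hreturn ⟨w, hw, rfl⟩).mono ?_⟩
  rintro n ⟨u, hu, hproj⟩
  rw [← hG.iterate_right n, ← homeomorph_coe_pow] at hproj
  obtain ⟨k, rfl⟩ := exists_eq_shift_zpow_of_proj_eq hproj
  exact ⟨k, hu⟩

lemma IA_proj_axis (y : Icc (1 : ℝ) 2) : IA (proj (axis y)) = proj (axis y) := by
  rw [← proj_mirror, mirror_axis]

lemma injective_proj_axis : Injective fun y ↦ proj (axis y) := fun y y' h ↦ by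
  simpa only [radius_proj, axis] using congrArg radius h

lemma proj_mem_annulusInt {u : AnnulusCover} (hbot : u.2 ≠ ⊥) (htop : u.2 ≠ ⊤) :
    (proj u : ℝ × ℝ) ∈ annulusInt := by
  change 1 < enorm2 (polar u) ∧ enorm2 (polar u) < 2
  rw [enorm2_polar]
  exact ⟨bot_lt_iff_ne_bot.2 hbot, lt_top_iff_ne_top.2 htop⟩

lemma dense_annulusInt : Dense {a : annulus | (a : ℝ × ℝ) ∈ annulusInt} := by
  have hdense : Dense (({⊥}ᶜ : Set (Icc (1 : ℝ) 2)) \ {⊤}) :=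
    (dense_compl_singleton ⊥).sdiff_singleton ⊤
  refine (proj_surjective.denseRange.dense_image continuous_proj
    (hdense.preimage (isOpenMap_snd (X := ℝ)))).mono ?_
  rintro _ ⟨u, ⟨hbot, htop⟩, rfl⟩
  exact proj_mem_annulusInt hbot htop

lemma exists_iterate_proj_axis {F : AnnulusCover ≃ₜ AnnulusCover} (hF : Reversible F)
    (hT : Commute F shift) {g : annulus → annulus} (hg : Semiconj proj F g) {y : Icc (1 : ℝ) 2}
    (hy : y ∈ latticeReturns F) : ∃ n, 1 ≤ n ∧ g^[n] (proj (axis y)) = proj (axis y) := by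
  obtain ⟨n, hn, k, hk⟩ := hy
  have hproj (u) :
      proj ((shift ^ (-k) * F ^ n : AnnulusCover ≃ₜ AnnulusCover) u) = g^[n] (proj u) := by
    rw [Homeomorph.mul_apply, proj_shift_zpow, homeomorph_coe_pow, hg.iterate_right n]
  have hfix := ((hF.pow n).shift_zpow_mul (hT.pow_left n) (-k)).mul_self_apply_axis (y := y) (by
    rw [Homeomorph.mul_apply, shift_zpow_apply, hk, Int.cast_neg, add_neg_cancel])
  refine ⟨n + n, by omega, ?_⟩
  rw [iterate_add_apply, ← hproj, ← hproj, ← Homeomorph.mul_apply, hfix]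

end AnnulusCover

/-! ### Area on the annulus -/

lemma annulus_subset_Icc_prod_Icc : annulus ⊆ Icc (-2) 2 ×ˢ Icc (-2) 2 := fun p hp ↦ by
  have h : p.1 ^ 2 + p.2 ^ 2 ≤ 2 ^ 2 := (Real.sqrt_le_left zero_le_two).1 hp.2
  exact ⟨abs_le.1 (abs_le_of_sq_le_sq (by nlinarith [sq_nonneg p.2]) zero_le_two),
    abs_le.1 (abs_le_of_sq_le_sq (by nlinarith [sq_nonneg p.1]) zero_le_two)⟩

lemma measurableSet_annulus : MeasurableSet annulus :=
  (isClosed_Icc.preimage continuous_enorm2).measurableSet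

lemma annulus_mem_nhds {p : ℝ × ℝ} (hp : p ∈ annulusInt) : annulus ∈ 𝓝 p :=
  mem_of_superset ((isOpen_Ioo.preimage continuous_enorm2).mem_nhds hp)
    fun _ hq ↦ ⟨hq.1.le, hq.2.le⟩

instance isFiniteMeasure_comap_annulus :
    IsFiniteMeasure ((volume : Measure (ℝ × ℝ)).comap (Subtype.val : annulus → ℝ × ℝ)) where
  measure_univ_lt_top := by
    rw [(MeasurableEmbedding.subtype_coe measurableSet_annulus).comap_apply]
    exact measure_lt_top_of_subset
      ((Subtype.coe_image_subset _ _).trans annulus_subset_Icc_prod_Icc)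
      (isCompact_Icc.prod isCompact_Icc).measure_ne_top

instance isOpenPosMeasure_comap_annulus :
    ((volume : Measure (ℝ × ℝ)).comap (Subtype.val : annulus → ℝ × ℝ)).IsOpenPosMeasure where
  open_pos V hV hne := by
    obtain ⟨a, ha, hint⟩ := AnnulusCover.dense_annulusInt.inter_open_nonempty V hV hne
    rw [(MeasurableEmbedding.subtype_coe measurableSet_annulus).comap_apply]
    refine (Measure.measure_pos_of_mem_nhds volume (x := (a : ℝ × ℝ)) ?_).ne'
    rw [← map_nhds_subtype_coe_eq_nhds a.2 (annulus_mem_nhds hint)]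
    exact image_mem_map (hV.mem_nhds ha)

open AnnulusCover Strip in
theorem franks_like_dichotomy_closed_annulus_general
    (f : annulus ≃ₜ annulus) (hrev : ∀ z : annulus, f (IA z) = IA (f.symm z))
    (μ : Measure annulus) [IsFiniteMeasure μ] [μ.IsOpenPosMeasure] (hμ : MeasurePreserving f μ μ) :
    (¬ ∃ (z : annulus) (k : ℕ), 1 ≤ k ∧ (⇑f)^[k] z = z) ∨
    {z : annulus | (z : ℝ × ℝ) ∈ annulusInt ∧ IA z = z ∧
      ∃ k : ℕ, 1 ≤ k ∧ (⇑f)^[k] z = z}.Infinite := by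
  refine or_iff_not_imp_left.2 fun hper ↦ ?_
  obtain ⟨z, q, hq, hz⟩ := not_not.1 hper
  obtain ⟨Φ, hΦ⟩ := exists_homeomorph_lift f
  have hF : Reversible (Φ ^ 2) := reversible_sq hrev hΦ
  have hT : Commute (Φ ^ 2) shift := commute_sq_shift hΦ
  have hpow : ∀ n, Semiconj proj ⇑((Φ ^ 2) ^ n) f^[2 * n] := fun n ↦
    pow_mul Φ 2 n ▸ semiconj_proj_pow hΦ (2 * n)
  have hrec : ∀ N, RecurrentModShift ((Φ ^ 2) ^ N) := fun N ↦
    recurrentModShift_of_semiconj (hμ.iterate _) (hpow N)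
  obtain ⟨u, rfl⟩ := proj_surjective z
  obtain ⟨p, hp⟩ : ∃ p : ℤ, ((Φ ^ 2) ^ q) u = (shift ^ p) u :=
    exists_eq_shift_zpow_of_proj_eq (by
      rw [hpow q, mul_comm, iterate_mul]
      exact IsFixedPt.iterate hz 2)
  have hinf := hF.infinite_latticeReturns hT (sq_apply_bot Φ) hrec hq hp
  refine ((hinf.sdiff (toFinite {⊥, ⊤})).image injective_proj_axis.injOn).mono ?_
  rintro _ ⟨y, ⟨hy, hends⟩, rfl⟩
  obtain ⟨n, hn, hfix⟩ := exists_iterate_proj_axis hF hT (semiconj_proj_pow hΦ 2) hy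
  rw [← iterate_mul] at hfix
  exact ⟨proj_mem_annulusInt (fun h ↦ hends (.inl h)) (fun h ↦ hends (.inr h)), IA_proj_axis y,
    2 * n, by omega, hfix⟩

/-- **Theorem 1.1 (Franks-like theorem for reversible maps).**
Every area preserving reversible homeomorphism of the closed annulus is either
periodic point free or has infinitely many interior symmetric periodic points. -/
theorem franks_like_dichotomy_closed_annulus
    (f : annulus ≃ₜ annulus)
    (hrev : ∀ z : annulus, f (IA z) = IA (f.symm z))
    (harea : MeasurePreserving f
      ((volume : Measure (ℝ × ℝ)).comap (Subtype.val : annulus → ℝ × ℝ))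
      ((volume : Measure (ℝ × ℝ)).comap (Subtype.val : annulus → ℝ × ℝ))) :
    (¬ ∃ (z : annulus) (k : ℕ), 1 ≤ k ∧ (⇑f)^[k] z = z) ∨
    {z : annulus | (z : ℝ × ℝ) ∈ annulusInt ∧
        (∃ k : ℕ, 1 ≤ k ∧ (⇑f)^[k] z = z) ∧
        (∃ l : ℕ, 1 ≤ l ∧ (⇑f)^[l] z = IA z)}.Infinite := by
  refine (franks_like_dichotomy_closed_annulus_general f hrev _ harea).imp_right (·.mono ?_)
  exact fun z ⟨hint, hsymm, hper⟩ ↦ ⟨hint, hper, by rwa [hsymm]⟩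
end
end

section
/- Let f : Å → Å be an area preserving reversible homeomorphism of the open annulus Å. Then either f has no periodic point at all (there is no z ∈ Å and integer k ≥ 1 with f^k(z) = z), or the set of symmetric periodic points of f (points z ∈ Å with f^k(z) = z and f^ℓ(z) = I(z) for some integers k, ℓ ≥ 1) is infinite. -/
open MeasureTheory Set

noncomputable section

lemma refl2_mem_annulusInt {p : ℝ × ℝ} (h : p ∈ annulusInt) : refl2 p ∈ annulusInt := by
  simpa [annulusInt, enorm2_refl2] using h

/-- The restriction `I_Å` of the reflection to the open annulus. -/
def IAo : annulusInt → annulusInt := fun z => ⟨refl2 z, refl2_mem_annulusInt z.2⟩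

/-!
For a reversible map, a point `z` of the reflection axis whose iterate `f^[n] z` lies on the axis
again is periodic, because the reflection carries the orbit segment from `z` to `f^[n] z` to its
continuation. Symmetric periodic points therefore come from returns to the axis.

An area preserving map of the annulus is nonwandering, and this forces returns once there is a
periodic point. Model the annulus by the punctured plane and one half of the axis by the positive
ray. The square of an iterate with a fixed point has a lift to the exponential cover that has a
fixed point and commutes with the deck translations. If no orbit returned to the ray, the lift or
its inverse would push the real axis upwards, while no iterate could push it past its next
translate, since the fixed point lies between two translates; a point just below the axis could then
not recur.

If `p` is a periodic point on the ray, fill in the origin and puncture the plane at `p` instead. The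
origin is now a fixed point, so there is a return to the part of the ray beyond `p`. Hence no
periodic point on the ray has largest modulus, and there are infinitely many.
-/

open Filter Function Topology

section Nonwandering

variable {X Y : Type*} [TopologicalSpace X] [TopologicalSpace Y]

/-- A map is nonwandering if every nonempty open set meets one of its own positive iterates. -/
def IsNonwandering (f : X → X) : Prop :=
  ∀ U : Set X, IsOpen U → U.Nonempty → ∃ x ∈ U, ∃ m, 1 ≤ m ∧ f^[m] x ∈ U

namespace IsNonwandering

variable {f : X → X} {F : Y → Y} {i : X → Y}

lemma exists_visits (hf : IsNonwandering f) (hfc : Continuous f) (k : ℕ) :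
    ∀ U : Set X, IsOpen U → U.Nonempty →
      ∃ x, ∃ s : Finset ℕ, s.card = k + 1 ∧ ∀ j ∈ s, f^[j] x ∈ U := by
  induction k with
  | zero => exact fun U _ ⟨x, hx⟩ => ⟨x, {0}, rfl, by simpa using hx⟩
  | succ k ih =>
    intro U hU hne
    obtain ⟨x₀, hx₀, m, hm, hmx₀⟩ := hf U hU hne
    obtain ⟨x, s, hcard, hs⟩ := ih (U ∩ f^[m] ⁻¹' U) (hU.inter (hU.preimage (hfc.iterate m)))
      ⟨x₀, hx₀, hmx₀⟩
    have hnotMem : m + s.sup id ∉ s := fun h => by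
      have := Finset.le_sup (f := id) h
      simp only [id] at this
      omega
    obtain ⟨j, hj, hjsup⟩ := s.exists_mem_eq_sup (Finset.card_pos.1 (by omega)) id
    refine ⟨x, insert (m + s.sup id) s, by rw [Finset.card_insert_of_notMem hnotMem, hcard], ?_⟩
    rw [Finset.forall_mem_insert, hjsup, id, iterate_add_apply]
    exact ⟨(hs j hj).2, fun j' hj' => (hs j' hj').1⟩

/-- Among `n + 1` visits of an orbit to an open set, two are at times congruent modulo `n`. -/
protected lemma iterate (hf : IsNonwandering f) (hfc : Continuous f) {n : ℕ} (hn : 1 ≤ n) :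
    IsNonwandering f^[n] := by
  intro U hU hne
  obtain ⟨x, s, hcard, hs⟩ := hf.exists_visits hfc n U hU hne
  obtain ⟨a, ha, b, hb, hab, hmod⟩ : ∃ a ∈ s, ∃ b ∈ s, a ≠ b ∧ a % n = b % n :=
    Finset.exists_ne_map_eq_of_card_lt_of_maps_to (t := Finset.range n) (by simp [hcard])
      fun j _ => by simpa using Nat.mod_lt j hn
  wlog hlt : a < b generalizing a b
  · exact this b hb a ha hab.symm hmod.symm (by omega)
  obtain ⟨c, hc⟩ := (Nat.modEq_iff_dvd' hlt.le).1 hmod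
  refine ⟨f^[a] x, hs a ha, c, Nat.one_le_iff_ne_zero.2 ?_, ?_⟩
  · rintro rfl
    omega
  · rw [← iterate_mul, ← hc, ← iterate_add_apply, Nat.sub_add_cancel hlt.le]
    exact hs b hb

protected lemma symm {f : X ≃ₜ X} (hf : IsNonwandering f) : IsNonwandering f.symm := by
  intro U hU hne
  obtain ⟨x, hx, m, hm, hmx⟩ := hf U hU hne
  exact ⟨f^[m] x, hmx, m, hm, by rwa [LeftInverse.iterate f.symm_apply_apply m x]⟩

lemma of_denseRange (hf : IsNonwandering f) (hi : Continuous i) (hdense : DenseRange i)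
    (h : Semiconj i f F) : IsNonwandering F := by
  intro U hU hne
  obtain ⟨x, hx, m, hm, hmx⟩ := hf (i ⁻¹' U) (hU.preimage hi) (hdense.exists_mem_open hU hne)
  exact ⟨i x, hx, m, hm, by rwa [← (h.iterate_right m) x]⟩

lemma of_isOpenEmbedding (hF : IsNonwandering F) (hi : IsOpenEmbedding i)
    (h : Semiconj i f F) : IsNonwandering f := by
  intro U hU hne
  obtain ⟨-, ⟨x, hx, rfl⟩, m, hm, hmx⟩ := hF (i '' U) (hi.isOpenMap U hU) (hne.image i)
  rw [← (h.iterate_right m) x, hi.injective.mem_set_image] at hmx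
  exact ⟨x, hx, m, hm, hmx⟩

lemma of_measurePreserving [MeasurableSpace X] [OpensMeasurableSpace X] {μ : Measure X}
    [IsFiniteMeasure μ] [μ.IsOpenPosMeasure] (hf : MeasurePreserving f μ μ) :
    IsNonwandering f := by
  intro U hU hne
  obtain ⟨x, hx, m, hm, hmx⟩ := hf.conservative.exists_mem_iterate_mem
    hU.measurableSet.nullMeasurableSet (hU.measure_pos μ hne).ne'
  exact ⟨x, hx, m, Nat.one_le_iff_ne_zero.2 hm, hmx⟩

end IsNonwandering

end Nonwandering

section Covering

variable {E X : Type*} [TopologicalSpace E] [TopologicalSpace X] {p : E → X}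

lemma exists_continuous_lift [SimplyConnectedSpace E] [LocallyPathConnectedSpace E]
    (hp : IsCoveringMap p) {h : X → X} (hh : Continuous h) {a b : E} (hab : p b = h (p a)) :
    ∃ F : E → E, Continuous F ∧ F a = b ∧ Semiconj p F h := by
  obtain ⟨F, ⟨hFa, hF⟩, -⟩ := hp.existsUnique_continuousMap_lifts ⟨h ∘ p, hh.comp hp.continuous⟩
    a b hab
  exact ⟨F, F.continuous, hFa, congrFun hF⟩

lemma exists_homeomorph_lift [SimplyConnectedSpace E] [LocallyPathConnectedSpace E]
    (hp : IsCoveringMap p) (h : X ≃ₜ X) {a b : E} (hab : p b = h (p a)) :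
    ∃ F : E ≃ₜ E, F a = b ∧ Semiconj p F h := by
  obtain ⟨F, hFc, hFa, hF⟩ := exists_continuous_lift hp h.continuous hab
  obtain ⟨K, hKc, hKb, hK⟩ := exists_continuous_lift hp h.symm.continuous
    (h.symm_apply_eq.2 hab).symm
  have hKF : K ∘ F = id := hp.eq_of_comp_eq (hKc.comp hFc) continuous_id
    (by ext z; simp [hK (F z), hF z]) a (by simp [hFa, hKb])
  have hFK : F ∘ K = id := hp.eq_of_comp_eq (hFc.comp hKc) continuous_id
    (by ext z; simp [hF (K z), hK z]) b (by simp [hFa, hKb])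
  exact ⟨⟨⟨F, K, congrFun hKF, congrFun hFK⟩, hFc, hKc⟩, hFa, hF⟩

end Covering

/-- The plane without the origin, the model of the open annulus in which maps are lifted to the
exponential covering. -/
abbrev PuncturedPlane := {z : ℂ // z ≠ 0}

/-- The exponential map, as the universal covering of the punctured plane. -/
def expPunctured (z : ℂ) : PuncturedPlane := ⟨Complex.exp z, z.exp_ne_zero⟩

local notation "τ" => (2 * (Real.pi : ℂ) * Complex.I)

lemma isCoveringMap_expPunctured : IsCoveringMap expPunctured := Complex.isCoveringMap_exp

lemma expPunctured_eq_iff {z w : ℂ} :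
    expPunctured z = expPunctured w ↔ ∃ k : ℤ, z = w + k • τ := by
  simp [expPunctured, Complex.exp_eq_exp_iff_exists_int]

lemma expPunctured_add_zsmul (z : ℂ) (k : ℤ) : expPunctured (z + k • τ) = expPunctured z :=
  expPunctured_eq_iff.2 ⟨k, rfl⟩

lemma expPunctured_log (w : PuncturedPlane) : expPunctured (Complex.log w) = w :=
  Subtype.ext (Complex.exp_log w.2)

lemma im_add_zsmul_period (z : ℂ) (k : ℤ) : (z + k • τ).im = z.im + k * (2 * Real.pi) := by
  simp

/-- Any two lifts of a map differ by a constant translation, so a lift changes by a constant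
translation along the period. -/
lemma exists_degree {h : PuncturedPlane → PuncturedPlane} {F : ℂ → ℂ} (hF : Continuous F)
    (hlift : Semiconj expPunctured F h) :
    ∃ d : ℤ, ∀ z, F (z + τ) = F z + d • τ := by
  have hper (z : ℂ) : expPunctured (z + τ) = expPunctured z := by
    simpa using expPunctured_add_zsmul z 1
  have hproj (z : ℂ) : expPunctured (F (z + τ)) = expPunctured (F z) := by
    rw [hlift, hper, hlift]
  obtain ⟨d, hd⟩ := expPunctured_eq_iff.1 (hproj 0)
  refine ⟨d, congrFun <| isCoveringMap_expPunctured.eq_of_comp_eq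
    (g₁ := fun z => F (z + τ)) (g₂ := fun z => F z + d • τ) (by fun_prop) (by fun_prop) ?_ 0 hd⟩
  ext1 z
  exact (hproj z).trans (expPunctured_add_zsmul _ _).symm

lemma map_add_zsmul_of_map_add {F : ℂ → ℂ} {d : ℤ} (hF : ∀ z, F (z + τ) = F z + d • τ)
    (z : ℂ) (k : ℤ) : F (z + k • τ) = F z + (k * d) • τ := by
  rw [mul_smul]
  exact AddConstMapClass.map_add_zsmul (⟨F, hF⟩ : AddConstMap ℂ ℂ τ (d • τ)) z k

lemma zsmul_period_injective : Injective fun k : ℤ => k • τ :=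
  smul_left_injective ℤ Complex.two_pi_I_ne_zero

/-- The degree of a lifted homeomorphism is a unit of `ℤ`, hence its own inverse. -/
lemma commute_lift_comp_self {h : PuncturedPlane ≃ₜ PuncturedPlane} {F : ℂ ≃ₜ ℂ}
    (hF : Semiconj expPunctured F h) : Function.Commute (F ∘ F) (· + τ) := by
  have hF' : Semiconj expPunctured F.symm h.symm := hF.inverses_right F.right_inv h.left_inv
  obtain ⟨d, hd⟩ := exists_degree F.continuous hF
  obtain ⟨e, he⟩ := exists_degree F.symm.continuous hF'
  have hde : d * e = 1 := zsmul_period_injective <| add_left_cancel (a := (0 : ℂ)) <| by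
    have := map_add_zsmul_of_map_add he (F 0) d
    rw [← hd, F.symm_apply_apply, F.symm_apply_apply] at this
    simpa using this.symm
  have hdd : d * d = 1 := by
    rcases Int.eq_one_or_neg_one_of_mul_eq_one hde with rfl | rfl <;> rfl
  intro z
  simp only [comp_apply, hd, map_add_zsmul_of_map_add hd, hdd, one_smul]

lemma exists_lift_comp_self {k : PuncturedPlane ≃ₜ PuncturedPlane} {w : PuncturedPlane}
    (hw : k w = w) :
    ∃ G : ℂ ≃ₜ ℂ, Semiconj expPunctured G (k ∘ k) ∧ Function.Commute G (· + τ) ∧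
      ∃ z, G z = z := by
  set z := Complex.log w
  have hz : expPunctured z = w := expPunctured_log w
  obtain ⟨F, hFz, hF⟩ := exists_homeomorph_lift isCoveringMap_expPunctured k (a := z) (b := z)
    (by rw [hz, hw])
  exact ⟨F.trans F, hF.comp_right hF, commute_lift_comp_self hF, z, by simp [hFz]⟩

lemma coe_homeomorph_pow {X : Type*} [TopologicalSpace X] (h : X ≃ₜ X) (n : ℕ) :
    ⇑(h ^ n) = h^[n] := by
  induction n with
  | zero => rfl
  | succ n ih => rw [pow_succ, iterate_succ, ← ih]; rfl

lemma map_add_zsmul_of_commute {F : ℂ → ℂ} (hF : Function.Commute F (· + τ)) (z : ℂ) (k : ℤ) :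
    F (z + k • τ) = F z + k • τ := by
  simpa using map_add_zsmul_of_map_add (d := 1) (fun z => by simpa using hF z) z k

section Axis

variable {A : ℂ ≃ₜ ℂ}

lemma im_pos_of_axis_im_pos (hA : Function.Commute A (· + τ))
    (haxis : ∀ z : ℂ, z.im = 0 → 0 < (A z).im) {z : ℂ} (hz : 0 ≤ z.im) : 0 < (A z).im := by
  have hL : IsPreconnected {w : ℂ | w.im ≤ 0} := (convex_halfSpace_im_le 0).isPreconnected
  have hne : ∀ w ∈ {w : ℂ | w.im ≤ 0}, (A.symm w).im ≠ 0 := fun w hw h0 =>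
    (haxis _ h0).not_ge (by simpa using hw)
  rcases hL.mapsTo_Ioi_or_Iio (Complex.continuous_im.comp A.symm.continuous).continuousOn hne with
    hpos | hneg
  · obtain ⟨N, hN⟩ := exists_nat_ge ((A 0).im / (2 * Real.pi))
    rw [div_le_iff₀ Real.two_pi_pos] at hN
    have hfar : (A (0 + (-N : ℤ) • τ)).im ≤ 0 := by
      rw [map_add_zsmul_of_commute hA, im_add_zsmul_period]
      push_cast
      linarith
    have := hpos hfar
    rw [mem_Ioi, comp_apply, A.symm_apply_apply, im_add_zsmul_period] at this
    push_cast [Complex.zero_im] at this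
    have : 0 ≤ N * (2 * Real.pi) := by positivity
    linarith
  · by_contra! hle
    have := hneg hle
    simp only [comp_apply, A.symm_apply_apply, mem_Iio] at this
    exact this.not_ge hz

lemma im_pos_or_im_neg_of_axis_im_ne_zero (hA : Function.Commute A (· + τ))
    (haxis : ∀ z : ℂ, z.im = 0 → (A z).im ≠ 0) :
    (∀ z : ℂ, 0 ≤ z.im → 0 < (A z).im) ∨ (∀ z : ℂ, z.im ≤ 0 → (A z).im < 0) := by
  have hline : IsPreconnected {w : ℂ | w.im = 0} :=
    (convex_hyperplane Complex.imLm.isLinear 0).isPreconnected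
  rcases hline.mapsTo_Ioi_or_Iio (Complex.continuous_im.comp A.continuous).continuousOn haxis with
    hpos | hneg
  · exact .inl fun z => im_pos_of_axis_im_pos hA hpos
  · right
    intro z hz
    let A' : ℂ ≃ₜ ℂ := ((Homeomorph.neg ℂ).trans A).trans (Homeomorph.neg ℂ)
    have hA' : Function.Commute A' (· + τ) := fun w => by
      have := map_add_zsmul_of_commute hA (-w) (-1)
      rw [neg_one_zsmul] at this
      change -A (-(w + τ)) = -A (-w) + τ
      rw [neg_add, this]
      ring
    have hA'pos : ∀ w : ℂ, w.im = 0 → 0 < (A' w).im := fun w hw => by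
      simpa [A'] using hneg (x := -w) (by simpa using hw)
    simpa [A'] using im_pos_of_axis_im_pos hA' hA'pos (z := -z) (by simpa using hz)

/-- Translating the fixed point into the strip `0 ≤ Im z < 2π` shows that `A` cannot push the
upper half-plane above the line `Im z = 2π`. -/
lemma im_lt_two_pi_of_axis_im_ne (hA : Function.Commute A (· + τ)) {z₀ : ℂ} (hz₀ : A z₀ = z₀)
    (haxis : ∀ z : ℂ, z.im = 0 → (A z).im ≠ 2 * Real.pi) {z : ℂ} (hz : z.im ≤ 0) :
    (A z).im < 2 * Real.pi := by
  let B : ℂ ≃ₜ ℂ := A.trans (Homeomorph.addRight (-τ))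
  have hBim (w : ℂ) : (B w).im = (A w).im - 2 * Real.pi := by simp [B, sub_eq_add_neg]
  have hB : Function.Commute B (· + τ) := fun w => by
    simp only [B, Homeomorph.trans_apply, Homeomorph.coe_addRight, hA w]
    exact add_right_comm _ _ _
  rcases im_pos_or_im_neg_of_axis_im_ne_zero hB
    (fun w hw => by rw [hBim]; exact sub_ne_zero.2 (haxis w hw)) with hup | hdown
  · obtain ⟨k, ⟨hk₀, hk₁⟩, -⟩ := existsUnique_add_zsmul_mem_Ico Real.two_pi_pos z₀.im 0
    rw [zsmul_eq_mul, ← im_add_zsmul_period] at hk₀ hk₁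
    have := hup _ hk₀
    rw [hBim, map_add_zsmul_of_commute hA, hz₀] at this
    linarith
  · have := hdown z hz
    rw [hBim] at this
    linarith

end Axis

/-- The positive real half-line in the punctured plane. -/
def posRay : Set PuncturedPlane := {z | 0 < (z : ℂ).re ∧ (z : ℂ).im = 0}

lemma expPunctured_mem_posRay {z : ℂ} {k : ℤ} (hz : z.im = k * (2 * Real.pi)) :
    expPunctured z ∈ posRay := by
  have hsin : Real.sin (k * (2 * Real.pi)) = 0 := by simpa using Real.sin_int_mul_two_pi_sub 0 k
  simp [posRay, expPunctured, Complex.exp_re, Complex.exp_im, hz, hsin, Real.exp_pos]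

section Return

variable {g : PuncturedPlane ≃ₜ PuncturedPlane} {G : ℂ ≃ₜ ℂ}

lemma im_iterate_lift_lt_two_pi (hG : Semiconj expPunctured G g)
    (hcomm : Function.Commute G (· + τ)) {z₀ : ℂ} (hz₀ : G z₀ = z₀)
    (hray : ∀ n, 1 ≤ n → ∀ w ∈ posRay, g^[n] w ∉ posRay) {n : ℕ} (hn : 1 ≤ n) {z : ℂ}
    (hz : z.im ≤ 0) : (G^[n] z).im < 2 * Real.pi := by
  rw [← coe_homeomorph_pow]
  refine im_lt_two_pi_of_axis_im_ne (z₀ := z₀) ?_ ?_ (fun w hw hGw => ?_) hz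
  · rw [coe_homeomorph_pow]
    exact hcomm.iterate_left n
  · rw [coe_homeomorph_pow, iterate_fixed hz₀]
  · refine hray n hn _ (expPunctured_mem_posRay (k := 0) (by simpa using hw)) ?_
    rw [← hG.iterate_right n w, ← coe_homeomorph_pow]
    exact expPunctured_mem_posRay (k := 1) (by simpa using hGw)

/-- A point that recurs from the region between the axis and its preimage would have to come back
through the next translate of the axis. -/
lemma not_forall_im_pos_lift (hNW : IsNonwandering g) (hG : Semiconj expPunctured G g)
    (hcomm : Function.Commute G (· + τ)) {z₀ : ℂ} (hz₀ : G z₀ = z₀)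
    (hray : ∀ n, 1 ≤ n → ∀ w ∈ posRay, g^[n] w ∉ posRay) :
    ¬ ∀ z : ℂ, 0 ≤ z.im → 0 < (G z).im := by
  intro hup
  have hV : IsOpen {z : ℂ | 0 < (G z).im} :=
    isOpen_lt continuous_const (Complex.continuous_im.comp G.continuous)
  have hU : IsOpen ({z : ℂ | 0 < (G z).im} ∩ {z | z.im < 0}) :=
    hV.inter (isOpen_lt Complex.continuous_im continuous_const)
  have hne : ({z : ℂ | 0 < (G z).im} ∩ {z | z.im < 0}).Nonempty :=
    mem_closure_iff.1 (by simp) _ hV (hup 0 le_rfl)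
  obtain ⟨-, ⟨x, ⟨hGx, hx⟩, rfl⟩, m, hm, y, ⟨hGy, hy⟩, hyx⟩ := hNW _
    (isCoveringMap_expPunctured.isLocalHomeomorph.isOpenMap _ hU) (hne.image _)
  rw [← hG.iterate_right m x] at hyx
  obtain ⟨k, rfl⟩ := expPunctured_eq_iff.1 hyx
  have hGmx : 0 ≤ (G^[m] x).im := by
    obtain ⟨j, rfl⟩ := Nat.exists_eq_add_of_le' hm
    have hmaps : MapsTo G {z | 0 ≤ z.im} {z | 0 ≤ z.im} := fun z hz => (hup z hz).le
    exact hmaps.iterate j (show 0 ≤ (G x).im from le_of_lt hGx)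
  have hlt := im_iterate_lift_lt_two_pi hG hcomm hz₀ hray (Nat.le_add_left 1 m) (le_of_lt hx)
  rw [iterate_succ_apply'] at hlt
  rw [mem_ofPred_eq, map_add_zsmul_of_commute hcomm, im_add_zsmul_period] at hGy
  rw [mem_ofPred_eq, im_add_zsmul_period] at hy
  have hk : (k : ℝ) < 0 := by nlinarith [Real.two_pi_pos]
  have hk' : (k : ℝ) ≤ -1 := by exact_mod_cast Int.le_sub_one_of_lt (Int.cast_lt_zero.1 hk)
  nlinarith [Real.two_pi_pos]

/-- Otherwise the lift or its inverse would move the real axis upwards. -/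
lemma exists_posRay_return_of_lift (hNW : IsNonwandering g) (hG : Semiconj expPunctured G g)
    (hcomm : Function.Commute G (· + τ)) {z₀ : ℂ} (hz₀ : G z₀ = z₀) :
    ∃ n, 1 ≤ n ∧ ∃ w ∈ posRay, g^[n] w ∈ posRay := by
  by_contra! hray
  have haxis : ∀ z : ℂ, z.im = 0 → (G z).im ≠ 0 := fun z hz hGz => by
    refine hray 1 le_rfl _ (expPunctured_mem_posRay (k := 0) (by simpa using hz)) ?_
    rw [iterate_one, ← hG]
    exact expPunctured_mem_posRay (k := 0) (by simpa using hGz)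
  rcases im_pos_or_im_neg_of_axis_im_ne_zero hcomm haxis with hup | hdown
  · exact not_forall_im_pos_lift hNW hG hcomm hz₀ hray hup
  · have hcomm' : Function.Commute G.symm (· + τ) := fun z => by
      rw [G.symm_apply_eq, hcomm, G.apply_symm_apply]
    refine not_forall_im_pos_lift hNW.symm (hG.inverses_right G.right_inv g.left_inv) hcomm'
      (G.symm_apply_eq.2 hz₀.symm) (fun n hn w hw hgw => hray n hn _ hgw ?_) fun z hz => ?_
    · rwa [LeftInverse.iterate g.apply_symm_apply n w]
    · by_contra! hle
      have := hdown _ hle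
      rw [G.apply_symm_apply] at this
      exact this.not_ge hz

theorem exists_posRay_return {h : PuncturedPlane ≃ₜ PuncturedPlane} (hNW : IsNonwandering h)
    (hne : (periodicPts h).Nonempty) : ∃ n, 1 ≤ n ∧ ∃ w ∈ posRay, h^[n] w ∈ posRay := by
  obtain ⟨w, q, hq, hw⟩ := hne
  obtain ⟨G, hG, hcomm, z₀, hz₀⟩ := exists_lift_comp_self (k := h ^ q)
    (by rw [coe_homeomorph_pow]; exact hw)
  have hpow : ⇑(h ^ (2 * q)) = (h ^ q) ∘ (h ^ q) := by rw [two_mul, pow_add]; rfl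
  rw [← hpow] at hG
  have hNW' : IsNonwandering (h ^ (2 * q)) := by
    rw [coe_homeomorph_pow]
    exact hNW.iterate h.continuous (by omega)
  obtain ⟨n, hn, hret⟩ := exists_posRay_return_of_lift hNW' hG hcomm hz₀
  refine ⟨2 * q * n, Nat.mul_pos (by omega) hn, ?_⟩
  rwa [iterate_mul, ← coe_homeomorph_pow]

end Return

section Ends

lemma tendsto_or_tendsto_of_tendsto_sup {X Y ι : Type*} [TopologicalSpace X] [TopologicalSpace Y]
    {f : X → Y} (hf : Continuous f) {l : Filter X} {p : ι → Prop} {s : ι → Set X}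
    (hl : l.HasBasis p s) (hs : ∀ i, p i → IsPreconnected (s i))
    {l₁ l₂ : Filter Y} {U₁ U₂ : Set Y} (hU₁ : IsOpen U₁) (hU₂ : IsOpen U₂) (hU : Disjoint U₁ U₂)
    (hl₁ : U₁ ∈ l₁) (hl₂ : U₂ ∈ l₂) (h : Tendsto f l (l₁ ⊔ l₂)) :
    Tendsto f l l₁ ∨ Tendsto f l l₂ := by
  obtain ⟨i, hi, hsub⟩ := hl.mem_iff.1 (h (union_mem_sup hl₁ hl₂))
  have hsi : ∀ᶠ x in l, x ∈ s i := hl.mem_of_mem hi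
  rcases ((hs i hi).image f hf.continuousOn).subset_or_subset hU₁ hU₂ hU
    (image_subset_iff.2 hsub) with hi₁ | hi₂
  · refine .inl fun t ht => mem_map.2 ?_
    filter_upwards [h.eventually (union_mem_sup ht hl₂), hsi] with x hx hxi
    exact hx.resolve_right (hU.notMem_of_mem_left (hi₁ (mem_image_of_mem f hxi)))
  · refine .inr fun t ht => mem_map.2 ?_
    filter_upwards [h.eventually (union_mem_sup hl₁ ht), hsi] with x hx hxi
    exact hx.resolve_left (hU.notMem_of_mem_right (hi₂ (mem_image_of_mem f hxi)))

/-- The logarithmic modulus, identifying the two ends of the punctured plane with `±∞`. -/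
def logNorm (z : PuncturedPlane) : ℝ := Real.log ‖(z : ℂ)‖

/-- The neighbourhoods of the puncture in the punctured plane. -/
def endZero : Filter PuncturedPlane := comap logNorm atBot

/-- The neighbourhoods of infinity in the punctured plane. -/
def endInfty : Filter PuncturedPlane := comap logNorm atTop

lemma continuous_logNorm : Continuous logNorm :=
  continuous_subtype_val.norm.log fun z => norm_ne_zero_iff.2 z.2

lemma logNorm_expPunctured (z : ℂ) : logNorm (expPunctured z) = z.re := by
  simp [logNorm, expPunctured, Complex.norm_exp]

lemma logNorm_surjective : Surjective logNorm := fun x =>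
  ⟨expPunctured x, by rw [logNorm_expPunctured, Complex.ofReal_re]⟩

lemma preimage_logNorm (A : Set ℝ) :
    logNorm ⁻¹' A = expPunctured '' (A ×ℂ Icc (-Real.pi) Real.pi) := by
  ext z
  constructor
  · intro hz
    rw [mem_preimage, ← expPunctured_log z, logNorm_expPunctured] at hz
    exact ⟨Complex.log z, ⟨hz, (Complex.neg_pi_lt_log_im z).le, Complex.log_im_le_pi z⟩,
      expPunctured_log z⟩
  · rintro ⟨w, hw, rfl⟩
    rw [mem_preimage, logNorm_expPunctured]
    exact hw.1

lemma isPreconnected_preimage_logNorm {A : Set ℝ} (hA : Convex ℝ A) :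
    IsPreconnected (logNorm ⁻¹' A) := by
  rw [preimage_logNorm]
  have hconv : Convex ℝ (A ×ℂ Icc (-Real.pi) Real.pi) :=
    (hA.linear_preimage Complex.reLm).inter ((convex_Icc _ _).linear_preimage Complex.imLm)
  exact hconv.isPreconnected.image _ isCoveringMap_expPunctured.continuous.continuousOn

lemma isCompact_preimage_logNorm {K : Set ℝ} (hK : IsCompact K) :
    IsCompact (logNorm ⁻¹' K) := by
  rw [preimage_logNorm]
  exact (hK.reProdIm isCompact_Icc).image isCoveringMap_expPunctured.continuous

lemma cocompact_eq_endZero_sup_endInfty :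
    cocompact PuncturedPlane = endZero ⊔ endInfty := by
  rw [endZero, endInfty, ← comap_sup, ← cocompact_eq_atBot_atTop]
  exact le_antisymm ((hasBasis_cocompact.comap _).ge_iff.2 fun K hK =>
    (isCompact_preimage_logNorm hK).compl_mem_cocompact) (comap_cocompact_le continuous_logNorm)

lemma endZero_eq_comap_nhds : endZero = comap Subtype.val (𝓝 0) := by
  have hexp : Real.exp ∘ logNorm = norm ∘ Subtype.val := funext fun z =>
    Real.exp_log (norm_pos_iff.2 z.2)
  rw [endZero, ← Real.comap_exp_nhds_zero, comap_comap, hexp, ← comap_comap, comap_norm_nhds_zero]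

variable (h : PuncturedPlane ≃ₜ PuncturedPlane)

lemma tendsto_endZero_or_endInfty {l : Filter ℝ} {s : ℝ → Set ℝ}
    (hl : l.HasBasis (fun _ => True) s) (hs : ∀ x, Convex ℝ (s x))
    (hle : comap logNorm l ≤ cocompact PuncturedPlane) :
    Tendsto h (comap logNorm l) endZero ∨ Tendsto h (comap logNorm l) endInfty := by
  refine tendsto_or_tendsto_of_tendsto_sup h.continuous (hl.comap logNorm)
    (fun x _ => isPreconnected_preimage_logNorm (hs x))
    (isOpen_Iio.preimage continuous_logNorm) (isOpen_Ioi.preimage continuous_logNorm)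
    ((Iio_disjoint_Ioi_same (a := 0)).preimage logNorm) (preimage_mem_comap (Iio_mem_atBot 0))
    (preimage_mem_comap (Ioi_mem_atTop 0)) ?_
  rw [← cocompact_eq_endZero_sup_endInfty, Tendsto, ← h.map_cocompact]
  exact map_mono hle

lemma not_cocompact_le_endInfty : ¬ cocompact PuncturedPlane ≤ endInfty := fun hle => by
  have : NeBot endZero := NeBot.comap_of_surj atBot_neBot logNorm_surjective
  have hdisj : Disjoint endZero endInfty := disjoint_comap disjoint_atBot_atTop
  rw [cocompact_eq_endZero_sup_endInfty] at hle
  exact NeBot.ne this (disjoint_self.1 (hdisj.mono_right (le_sup_left.trans hle)))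

/-- A homeomorphism either fixes or exchanges the two ends. -/
lemma tendsto_comp_self_endZero : Tendsto (h ∘ h) endZero endZero := by
  have hcc := cocompact_eq_endZero_sup_endInfty
  rcases tendsto_endZero_or_endInfty h atBot_basis convex_Iic
    (le_sup_left.trans hcc.ge) with h₀₀ | h₀
  · exact h₀₀.comp h₀₀
  rcases tendsto_endZero_or_endInfty h atTop_basis convex_Ici
    (le_sup_right.trans hcc.ge) with h₁ | h₁₁
  · exact h₁.comp h₀
  · refine absurd ?_ not_cocompact_le_endInfty
    rw [← h.map_cocompact, hcc]
    exact h₀.sup h₁₁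

end Ends

section Extension

variable {X : Type*} [TopologicalSpace X] [T1Space X] {x : X}

lemma continuous_ofSubtype_ne [DecidablePred fun y : X => y ≠ x] {g : Equiv.Perm {y // y ≠ x}}
    (hg : Continuous g) (hgx : Tendsto g (comap Subtype.val (𝓝 x)) (comap Subtype.val (𝓝 x))) :
    Continuous (Equiv.Perm.ofSubtype g) := by
  have hcoe : Equiv.Perm.ofSubtype g ∘ Subtype.val = Subtype.val ∘ g :=
    funext (Equiv.Perm.ofSubtype_apply_coe g)
  refine continuous_iff_continuousAt.2 fun y => ?_
  by_cases hy : y = x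
  · subst hy
    have hnhds : 𝓝[≠] y = map Subtype.val (comap (Subtype.val : {z // z ≠ y} → X) (𝓝 y)) :=
      (map_comap_setCoe_val (𝓝 y) {y}ᶜ).symm
    rw [continuousAt_iff_punctured_nhds, Equiv.Perm.ofSubtype_apply_of_not_mem g (by simp),
      hnhds, tendsto_map'_iff, hcoe]
    exact tendsto_comap_iff.1 hgx
  · have hopen : IsOpenEmbedding (Subtype.val : {y // y ≠ x} → X) :=
      isOpen_ne.isOpenEmbedding_subtypeVal
    rw [← hopen.continuousAt_iff (x := ⟨y, hy⟩), hcoe]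
    exact (continuous_subtype_val.comp hg).continuousAt

lemma exists_homeomorph_extension (g : {y // y ≠ x} ≃ₜ {y // y ≠ x})
    (hg : Tendsto g (comap Subtype.val (𝓝 x)) (comap Subtype.val (𝓝 x)))
    (hg' : Tendsto g.symm (comap Subtype.val (𝓝 x)) (comap Subtype.val (𝓝 x))) :
    ∃ E : X ≃ₜ X, E x = x ∧ Semiconj Subtype.val g E := by
  classical
  refine ⟨⟨Equiv.Perm.ofSubtype g.toEquiv, continuous_ofSubtype_ne g.continuous hg, ?_⟩,
    Equiv.Perm.ofSubtype_apply_of_not_mem _ (by simp),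
    fun y => (Equiv.Perm.ofSubtype_apply_coe g.toEquiv y).symm⟩
  have hsymm : (Equiv.Perm.ofSubtype g.toEquiv).symm = Equiv.Perm.ofSubtype g.symm.toEquiv :=
    (map_inv Equiv.Perm.ofSubtype g.toEquiv).symm
  simpa only [Equiv.invFun_as_coe, hsymm] using continuous_ofSubtype_ne g.symm.continuous hg'

end Extension

/-- The plane is punctured at `a`, and `b` supplies the periodic point. -/
lemma exists_ray_return {E : ℂ ≃ₜ ℂ} (hNW : IsNonwandering E) {a b : ℂ} (hab : b ≠ a)
    (ha : E a = a) (hb : E b = b) :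
    ∃ n, 1 ≤ n ∧ ∃ z, (a.re < z.re ∧ z.im = a.im) ∧ a.re < (E^[n] z).re ∧ (E^[n] z).im = a.im := by
  let T : ℂ ≃ₜ ℂ := ((Homeomorph.addRight a).trans E).trans (Homeomorph.addRight (-a))
  have hT0 : T 0 = 0 := by simp [T, ha]
  let g : PuncturedPlane ≃ₜ PuncturedPlane := T.subtype fun z => by
    rw [not_iff_not, ← T.injective.eq_iff, hT0]
  have hi : IsOpenEmbedding fun w : PuncturedPlane => (w : ℂ) + a :=
    (Homeomorph.addRight a).isOpenEmbedding.comp isOpen_ne.isOpenEmbedding_subtypeVal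
  have hsemi : Semiconj (fun w : PuncturedPlane => (w : ℂ) + a) g E := fun w => by
    simp [g, T]
  have hper : (⟨b - a, sub_ne_zero.2 hab⟩ : PuncturedPlane) ∈ periodicPts g :=
    ⟨1, one_pos, Subtype.ext (by simp [g, T, hb, sub_eq_add_neg])⟩
  obtain ⟨n, hn, w, hw, hgw⟩ := exists_posRay_return (hNW.of_isOpenEmbedding hi hsemi) ⟨_, hper⟩
  refine ⟨n, hn, w + a, ?_, ?_⟩
  · simpa [posRay] using hw
  · rw [← hsemi.iterate_right n w]
    simpa [posRay] using hgw

section Infinite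

variable {h : PuncturedPlane ≃ₜ PuncturedPlane}

lemma exists_extension_comp_self (k : PuncturedPlane ≃ₜ PuncturedPlane) :
    ∃ E : ℂ ≃ₜ ℂ, E 0 = 0 ∧ Semiconj Subtype.val (k ∘ k) E := by
  have hk := tendsto_comp_self_endZero k
  have hk' := tendsto_comp_self_endZero k.symm
  rw [endZero_eq_comap_nhds] at hk hk'
  exact exists_homeomorph_extension (k.trans k) hk hk'

/-- Filling in the origin and puncturing the plane at `p` instead makes the origin a fixed point
and `(p, ∞)` the positive ray. -/
lemma exists_periodicPt_re_gt (hNW : IsNonwandering h)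
    (hret : ∀ n, 1 ≤ n → ∀ w ∈ posRay, h^[n] w ∈ posRay → w ∈ periodicPts h)
    {p : PuncturedPlane} (hp : p ∈ posRay) (hper : p ∈ periodicPts h) :
    ∃ w ∈ posRay ∩ periodicPts h, (p : ℂ).re < (w : ℂ).re := by
  obtain ⟨q, hq, hqp⟩ := hper
  obtain ⟨E, hE0, hE⟩ := exists_extension_comp_self (h ^ q)
  have hpow : (h ^ q) ∘ (h ^ q) = h^[2 * q] := by
    rw [coe_homeomorph_pow, two_mul, iterate_add]
  rw [hpow] at hE
  have hEp : E p = p := by rw [← hE p, (hqp.const_mul 2).eq]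
  have hENW : IsNonwandering E := (hNW.iterate h.continuous (by omega)).of_denseRange
    continuous_subtype_val (dense_compl_singleton 0).denseRange_val hE
  obtain ⟨n, hn, z, ⟨hz, hz0⟩, hEz, hEz0⟩ := exists_ray_return hENW p.2.symm hEp hE0
  rw [hp.2] at hz0 hEz0
  have hzre : 0 < z.re := hp.1.trans hz
  let w : PuncturedPlane := ⟨z, fun h0 => by simp [h0] at hzre⟩
  rw [← hE.iterate_right n w, ← iterate_mul] at hEz hEz0
  exact ⟨w, ⟨⟨hzre, hz0⟩, hret _ (Nat.mul_pos (by omega) hn) w ⟨hzre, hz0⟩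
    ⟨hp.1.trans hEz, hEz0⟩⟩, hz⟩

theorem infinite_posRay_inter_periodicPts (hNW : IsNonwandering h)
    (hret : ∀ n, 1 ≤ n → ∀ w ∈ posRay, h^[n] w ∈ posRay → w ∈ periodicPts h)
    (hne : (periodicPts h).Nonempty) : (posRay ∩ periodicPts h).Infinite := by
  intro hfin
  obtain ⟨n, hn, w, hw, hhw⟩ := exists_posRay_return hNW hne
  obtain ⟨p, ⟨hp, hper⟩, hmax⟩ := hfin.exists_maximalFor (fun z : PuncturedPlane => (z : ℂ).re) _
    ⟨w, hw, hret n hn w hw hhw⟩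
  obtain ⟨w, hw, hlt⟩ := exists_periodicPt_re_gt hNW hret hp hper
  exact hlt.not_ge (hmax hw hlt.le)

end Infinite

section Radial

variable {E : Type*} [NormedAddCommGroup E] [NormedSpace ℝ E] {A B C : Set ℝ}

lemma norm_div_norm_smul {r : ℝ} (hr : 0 ≤ r) {z : E} (hz : ‖z‖ ≠ 0) : ‖(r / ‖z‖) • z‖ = r := by
  rw [norm_smul, norm_div, norm_norm, div_mul_cancel₀ _ hz, Real.norm_of_nonneg hr]

/-- The map of the shell `‖z‖ ∈ A` onto the shell `‖z‖ ∈ B` that preserves directions and changes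
norms by `φ`. -/
def radialMap (hA : A ⊆ Ioi 0) (hB : B ⊆ Ioi 0) (φ : A → B) (z : {z : E // ‖z‖ ∈ A}) :
    {z : E // ‖z‖ ∈ B} :=
  ⟨((φ ⟨‖(z : E)‖, z.2⟩ : ℝ) / ‖(z : E)‖) • (z : E), by
    rw [norm_div_norm_smul (le_of_lt (hB (φ _).2)) (ne_of_gt (hA z.2))]
    exact (φ _).2⟩

variable {hA : A ⊆ Ioi 0} {hB : B ⊆ Ioi 0} {hC : C ⊆ Ioi 0}

lemma coe_radialMap (φ : A → B) (z : {z : E // ‖z‖ ∈ A}) :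
    (radialMap hA hB φ z : E) = ((φ ⟨‖(z : E)‖, z.2⟩ : ℝ) / ‖(z : E)‖) • (z : E) :=
  rfl

lemma norm_radialMap (φ : A → B) (z : {z : E // ‖z‖ ∈ A}) :
    ‖(radialMap hA hB φ z : E)‖ = φ ⟨‖(z : E)‖, z.2⟩ :=
  norm_div_norm_smul (le_of_lt (hB (φ _).2)) (ne_of_gt (hA z.2))

lemma radialMap_id (z : {z : E // ‖z‖ ∈ A}) : radialMap hA hA id z = z := by
  ext
  simp [radialMap, div_self (ne_of_gt (hA z.2) : ‖(z : E)‖ ≠ 0)]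

lemma radialMap_radialMap (ψ : B → C) (φ : A → B) (z : {z : E // ‖z‖ ∈ A}) :
    radialMap hB hC ψ (radialMap hA hB φ z) = radialMap hA hC (ψ ∘ φ) z := by
  have hφ : (φ ⟨‖(z : E)‖, z.2⟩ : ℝ) ≠ 0 := ne_of_gt (hB (φ _).2)
  have hnorm : (⟨‖(radialMap hA hB φ z : E)‖, (radialMap hA hB φ z).2⟩ : B) = φ ⟨‖(z : E)‖, z.2⟩ :=
    Subtype.ext (norm_radialMap φ z)
  ext
  rw [coe_radialMap ψ, hnorm, norm_radialMap, coe_radialMap, coe_radialMap, smul_smul,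
    div_mul_div_cancel₀ hφ, comp_apply]

lemma continuous_radialMap {φ : A → B} (hφ : Continuous φ) :
    Continuous (radialMap hA hB φ : {z : E // ‖z‖ ∈ A} → _) := by
  have hnorm : Continuous fun z : {z : E // ‖z‖ ∈ A} => ‖(z : E)‖ := continuous_subtype_val.norm
  have hφnorm : Continuous fun z : {z : E // ‖z‖ ∈ A} => (φ ⟨‖(z : E)‖, z.2⟩ : ℝ) :=
    continuous_subtype_val.comp (hφ.comp (hnorm.subtype_mk _))
  exact ((hφnorm.div hnorm fun z => ne_of_gt (hA z.2)).smul continuous_subtype_val).subtype_mk _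

variable (E) in
/-- The direction-preserving homeomorphism between two shells induced by a homeomorphism of the
sets of norms. -/
def radialHomeomorph (hA : A ⊆ Ioi 0) (hB : B ⊆ Ioi 0) (φ : A ≃ₜ B) :
    {z : E // ‖z‖ ∈ A} ≃ₜ {z : E // ‖z‖ ∈ B} where
  toFun := radialMap hA hB φ
  invFun := radialMap hB hA φ.symm
  left_inv z := by rw [radialMap_radialMap, φ.symm_comp_self, radialMap_id]
  right_inv z := by rw [radialMap_radialMap, φ.self_comp_symm, radialMap_id]
  continuous_toFun := continuous_radialMap φ.continuous
  continuous_invFun := continuous_radialMap φ.symm.continuous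

end Radial

section Annulus

/-- The homeomorphism `r ↦ (r - 1) / (2 - r)` between the ranges of radii of the annulus and of the
punctured plane. -/
def radiusHomeomorph : Ioo (1 : ℝ) 2 ≃ₜ Ioi (0 : ℝ) where
  toFun r := ⟨(r - 1) / (2 - r), div_pos (sub_pos.2 r.2.1) (sub_pos.2 r.2.2)⟩
  invFun s := ⟨(1 + 2 * s) / (1 + s), by
    have hs : (0 : ℝ) < s := s.2
    rw [mem_Ioo, lt_div_iff₀ (by positivity), div_lt_iff₀ (by positivity)]
    constructor <;> linarith⟩
  left_inv r := by
    have hr : 2 - (r : ℝ) ≠ 0 := (sub_pos.2 r.2.2).ne'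
    ext
    field_simp
    ring
  right_inv s := by
    have hs : 1 + (s : ℝ) ≠ 0 := (add_pos one_pos s.2).ne'
    ext
    field_simp
    ring
  continuous_toFun := by
    refine Continuous.subtype_mk (Continuous.div (by fun_prop) (by fun_prop) fun r => ?_) _
    exact (sub_pos.2 r.2.2).ne'
  continuous_invFun := by
    refine Continuous.subtype_mk (Continuous.div (by fun_prop) (by fun_prop) fun s => ?_) _
    exact (add_pos one_pos s.2).ne'

/-- The identification `(x, y) ↦ y + ix` of `ℝ²` with `ℂ`, under which the axis of the reflection
becomes the real axis. -/
def swapHomeomorph : ℝ × ℝ ≃ₜ ℂ :=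
  (Homeomorph.prodComm ℝ ℝ).trans Complex.equivRealProdCLM.symm.toHomeomorph

lemma norm_swapHomeomorph (p : ℝ × ℝ) : ‖swapHomeomorph p‖ = enorm2 p := by
  change ‖(⟨p.2, p.1⟩ : ℂ)‖ = _
  rw [Complex.norm_def, Complex.normSq_mk, enorm2]
  ring_nf

lemma mem_annulusInt_iff {p : ℝ × ℝ} : p ∈ annulusInt ↔ ‖swapHomeomorph p‖ ∈ Ioo (1 : ℝ) 2 := by
  rw [norm_swapHomeomorph]
  rfl

lemma isOpen_annulusInt : IsOpen annulusInt := by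
  have : annulusInt = swapHomeomorph ⁻¹' (norm ⁻¹' Ioo (1 : ℝ) 2) := ext fun _ => mem_annulusInt_iff
  rw [this]
  exact (isOpen_Ioo.preimage continuous_norm).preimage swapHomeomorph.continuous

/-- The radial homeomorphism from the open annulus onto the punctured plane, taking the half of the
reflection axis with `y > 0` to the positive ray. -/
def annulusHomeomorph : annulusInt ≃ₜ PuncturedPlane :=
  ((swapHomeomorph.subtype fun _ => mem_annulusInt_iff).trans
    (radialHomeomorph ℂ (fun _ hr => one_pos.trans hr.1) Subset.rfl radiusHomeomorph)).trans
    ((Homeomorph.refl ℂ).subtype fun _ => norm_pos_iff)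

lemma IAo_eq_self_of_mem_posRay {z : annulusInt} (hz : annulusHomeomorph z ∈ posRay) :
    IAo z = z := by
  obtain ⟨c, hc⟩ : ∃ c : ℝ, (annulusHomeomorph z : ℂ) = c • swapHomeomorph z := ⟨_, rfl⟩
  rw [posRay, mem_ofPred_eq, hc, Complex.smul_re, Complex.smul_im, smul_eq_mul, smul_eq_mul] at hz
  have hx : (z : ℝ × ℝ).1 = 0 := (mul_eq_zero.1 hz.2).resolve_left (left_ne_zero_of_mul hz.1.ne')
  ext <;> simp [IAo, refl2, hx]

lemma isFiniteMeasure_comap_annulusInt :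
    IsFiniteMeasure ((volume : Measure (ℝ × ℝ)).comap (Subtype.val : annulusInt → ℝ × ℝ)) := by
  refine ⟨?_⟩
  rw [comap_subtype_coe_apply isOpen_annulusInt.measurableSet, image_univ, Subtype.range_coe]
  have hK : IsCompact (swapHomeomorph ⁻¹' Metric.closedBall 0 2) :=
    swapHomeomorph.isCompact_preimage.2 (isCompact_closedBall 0 2)
  have hsub : annulusInt ⊆ swapHomeomorph ⁻¹' Metric.closedBall 0 2 := fun p hp =>
    mem_closedBall_zero_iff.2 (mem_annulusInt_iff.1 hp).2.le
  exact (measure_mono hsub).trans_lt hK.measure_lt_top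

lemma isNonwandering_of_areaPreserving {f : annulusInt → annulusInt}
    (hf : MeasurePreserving f
      ((volume : Measure (ℝ × ℝ)).comap (Subtype.val : annulusInt → ℝ × ℝ))
      ((volume : Measure (ℝ × ℝ)).comap (Subtype.val : annulusInt → ℝ × ℝ))) :
    IsNonwandering f := by
  have := isFiniteMeasure_comap_annulusInt
  have := Measure.IsOpenPosMeasure.comap (volume : Measure (ℝ × ℝ))
    isOpen_annulusInt.isOpenEmbedding_subtypeVal
  exact .of_measurePreserving hf

end Annulus

lemma isPeriodicPt_two_mul_of_reversible {X : Type*} {f f' I : X → X} (hf' : LeftInverse f' f)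
    (hrev : Semiconj I f' f) {n : ℕ} {z : X} (hz : I z = z) (hzn : I (f^[n] z) = f^[n] z) :
    IsPeriodicPt f (2 * n) z := by
  calc f^[2 * n] z = f^[n] (f^[n] z) := by rw [two_mul, iterate_add_apply]
    _ = f^[n] (I (f^[n] z)) := by rw [hzn]
    _ = I (f'^[n] (f^[n] z)) := (hrev.iterate_right n _).symm
    _ = z := by rw [hf'.iterate n, hz]

theorem franks_like_dichotomy_open_annulus_general {X : Type*} [TopologicalSpace X]
    (φ : X ≃ₜ PuncturedPlane) {I : X → X} (hI : ∀ z, φ z ∈ posRay → I z = z)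
    (f : X ≃ₜ X) (hrev : ∀ z, f (I z) = I (f.symm z)) (hf : IsNonwandering f) :
    (¬ ∃ (z : X) (k : ℕ), 1 ≤ k ∧ f^[k] z = z) ∨
      {z : X | (∃ k, 1 ≤ k ∧ f^[k] z = z) ∧ ∃ l, 1 ≤ l ∧ f^[l] z = I z}.Infinite := by
  refine or_iff_not_imp_left.2 fun hper => ?_
  obtain ⟨z, k, hk, hz⟩ := not_not.1 hper
  let h : PuncturedPlane ≃ₜ PuncturedPlane := φ.symm.trans (f.trans φ)
  have hφ : Semiconj φ f h := fun x => by simp [h]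
  have hφ' : Semiconj φ.symm h f := fun w => by simp [h]
  have hNW : IsNonwandering h := hf.of_denseRange φ.continuous φ.surjective.denseRange hφ
  have hret : ∀ n, 1 ≤ n → ∀ w ∈ posRay, h^[n] w ∈ posRay → w ∈ periodicPts h := by
    intro n hn w hw hhw
    obtain ⟨x, rfl⟩ := φ.surjective w
    rw [← hφ.iterate_right n x] at hhw
    exact ⟨2 * n, by omega, (isPeriodicPt_two_mul_of_reversible f.symm_apply_apply
      (fun y => (hrev y).symm) (hI x hw) (hI _ hhw)).map hφ⟩
  have hinf := infinite_posRay_inter_periodicPts hNW hret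
    ⟨φ z, k, hk, (show IsPeriodicPt f k z from hz).map hφ⟩
  refine (hinf.preimage fun w _ => φ.surjective w).mono fun x hx => ?_
  obtain ⟨n, hn, hxn⟩ := hx.2
  have hxper : IsPeriodicPt f n x := by simpa using hxn.map hφ'
  exact ⟨⟨n, hn, hxper⟩, n, hn, hxper.trans (hI x hx.1).symm⟩

/-- **Franks-like theorem for reversible maps on the open annulus.**
Every area preserving reversible homeomorphism of the open annulus is either
periodic point free or has infinitely many symmetric periodic points. -/
theorem franks_like_dichotomy_open_annulus
    (f : annulusInt ≃ₜ annulusInt)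
    (hrev : ∀ z : annulusInt, f (IAo z) = IAo (f.symm z))
    (harea : MeasurePreserving f
      ((volume : Measure (ℝ × ℝ)).comap (Subtype.val : annulusInt → ℝ × ℝ))
      ((volume : Measure (ℝ × ℝ)).comap (Subtype.val : annulusInt → ℝ × ℝ))) :
    (¬ ∃ (z : annulusInt) (k : ℕ), 1 ≤ k ∧ (⇑f)^[k] z = z) ∨
    {z : annulusInt |
        (∃ k : ℕ, 1 ≤ k ∧ (⇑f)^[k] z = z) ∧
        (∃ l : ℕ, 1 ≤ l ∧ (⇑f)^[l] z = IAo z)}.Infinite :=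
  franks_like_dichotomy_open_annulus_general annulusHomeomorph
    (fun _ => IAo_eq_self_of_mem_posRay) f hrev (isNonwandering_of_areaPreserving harea)
end
end
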